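/- arXiv:2108.11074 — 2 statements merged into one kernel-verified Lean document; each statement's English description precedes it below -/
import Mathlib

section
/- For every n > k, the log-likelihood ratio satisfies Λ_{xy,n} = (n−k)·Î_n^{(k)}(X→Y‖Z), i.e., the Neyman–Pearson test statistic equals (n−k) times the plug-in estimator of the directed information. -/
open MeasureTheory Filter Finset
open scoped BigOperators Topology ENNReal NNReal Classical

namespace DIG

/-- Extended-real logarithm: `⊥` on nonpositive reals, so that the log-likelihood of an
impossible observation is `-∞`. -/
noncomputable def elog (x : ℝ) : EReal := if x ≤ 0 then (⊥ : EReal) else ((Real.log x : ℝ) : EReal)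

/-- A block of length `L` over the alphabet `𝒳`. -/
abbrev Blk (𝒳 : Type*) (L : ℕ) : Type _ := Fin L → 𝒳

/-- A joint history of the three processes: three `k`-blocks. -/
abbrev Hist (𝒳 : Type*) (k : ℕ) : Type _ := Blk 𝒳 k × Blk 𝒳 k × Blk 𝒳 k

/-- A joint symbol of the three processes. -/
abbrev Sym (𝒳 : Type*) : Type _ := 𝒳 × 𝒳 × 𝒳

variable {𝒳 : Type*} [Fintype 𝒳] [DecidableEq 𝒳] [Nonempty 𝒳]
variable {Ω : Type*} [MeasurableSpace Ω]

/-- The real-valued measure of a set. -/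
noncomputable def mreal (μ : MeasureTheory.Measure Ω) (s : Set Ω) : ℝ := (μ s).toReal

/-- Kullback-Leibler divergence between two pmfs on a finite set (with the usual
`0 log 0 = 0` convention, automatic since `0 * x = 0`). -/
noncomputable def KLfin {S : Type*} [Fintype S] (p q : S → ℝ) : ℝ :=
  ∑ s, p s * Real.log (p s / q s)

/-- Shannon entropy of a pmf on a finite set. -/
noncomputable def Hent {S : Type*} [Fintype S] (p : S → ℝ) : ℝ :=
  -∑ s, p s * Real.log (p s)

/-- Pushforward (marginal) of a pmf along a map of finite sets. -/
noncomputable def pushf {S T : Type*} [Fintype S] [DecidableEq T] (g : S → T) (p : S → ℝ) :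
    T → ℝ := fun t => ∑ s, if g s = t then p s else 0

/-! ### Marginals of a joint distribution of `(k+1)`-blocks of three processes -/

/-- Marginal of `(Y₁ᵏ, Z₁ᵏ⁺¹)`. -/
noncomputable def margYkZ {k : ℕ} (p : Blk 𝒳 (k+1) → Blk 𝒳 (k+1) → Blk 𝒳 (k+1) → ℝ)
    (β : Blk 𝒳 k) (c : Blk 𝒳 (k+1)) : ℝ :=
  ∑ a : Blk 𝒳 (k+1), ∑ yl : 𝒳, p a (Fin.snoc β yl) c

/-- Marginal of `(Y₁ᵏ⁺¹, Z₁ᵏ⁺¹)`. -/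
noncomputable def margYZ {k : ℕ} (p : Blk 𝒳 (k+1) → Blk 𝒳 (k+1) → Blk 𝒳 (k+1) → ℝ)
    (b c : Blk 𝒳 (k+1)) : ℝ :=
  ∑ a : Blk 𝒳 (k+1), p a b c

/-- Marginal of `(X₁ᵏ⁺¹, Y₁ᵏ, Z₁ᵏ⁺¹)`. -/
noncomputable def margXYkZ {k : ℕ} (p : Blk 𝒳 (k+1) → Blk 𝒳 (k+1) → Blk 𝒳 (k+1) → ℝ)
    (a : Blk 𝒳 (k+1)) (β : Blk 𝒳 k) (c : Blk 𝒳 (k+1)) : ℝ :=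
  ∑ yl : 𝒳, p a (Fin.snoc β yl) c

/-- Marginal of `(X₁ᵏ, Y₁ᵏ, Z₁ᵏ)` (the first `k` coordinates of each block). -/
noncomputable def margK {k : ℕ} (p : Blk 𝒳 (k+1) → Blk 𝒳 (k+1) → Blk 𝒳 (k+1) → ℝ)
    (α β γ : Blk 𝒳 k) : ℝ :=
  ∑ xl : 𝒳, ∑ yl : 𝒳, ∑ zl : 𝒳, p (Fin.snoc α xl) (Fin.snoc β yl) (Fin.snoc γ zl)

/-- Conditional mutual information `I(Y_{k+1}; X₁ᵏ⁺¹ | Y₁ᵏ, Z₁ᵏ⁺¹)` computed under the joint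
pmf `p` of the three `(k+1)`-blocks. -/
noncomputable def condMI {k : ℕ} (p : Blk 𝒳 (k+1) → Blk 𝒳 (k+1) → Blk 𝒳 (k+1) → ℝ) : ℝ :=
  ∑ a : Blk 𝒳 (k+1), ∑ b : Blk 𝒳 (k+1), ∑ c : Blk 𝒳 (k+1),
    p a b c * Real.log ((p a b c * margYkZ p (Fin.init b) c) /
      (margYZ p b c * margXYkZ p a (Fin.init b) c))

/-! ### Transition matrices and factorization (absence of the edge `X → Y`) -/

/-- `Q` is a transition probability matrix for the joint `k`-th order Markov process. -/
def IsTransMat {k : ℕ} (Q : Hist 𝒳 k → Sym 𝒳 → ℝ) : Prop :=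
  (∀ h s, 0 ≤ Q h s) ∧ (∀ h, ∑ s : Sym 𝒳, Q h s = 1)

/-- The factorization of the transition matrix expressing the absence of the edge `X → Y`:
`Q(x',y',z' | hx,hy,hz) = Q1(x',z' | hx,hy,hz) · Q2(y' | hy, (hz,z'))`. -/
def IsFactorized {k : ℕ} (Q : Hist 𝒳 k → Sym 𝒳 → ℝ) : Prop :=
  ∃ (Q1 : Hist 𝒳 k → 𝒳 × 𝒳 → ℝ) (Q2 : Blk 𝒳 k × Blk 𝒳 (k+1) → 𝒳 → ℝ),
    (∀ h p, 0 ≤ Q1 h p) ∧ (∀ h, ∑ p : 𝒳 × 𝒳, Q1 h p = 1) ∧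
    (∀ h y, 0 ≤ Q2 h y) ∧ (∀ h, ∑ y : 𝒳, Q2 h y = 1) ∧
    (∀ (hx hy hz : Blk 𝒳 k) (x' y' z' : 𝒳),
      Q (hx, hy, hz) (x', y', z') = Q1 (hx, hy, hz) (x', z') * Q2 (hy, Fin.snoc hz z') y')

/-! ### The process, stationarity, Markov property, Assumption 3 -/

/-- The event that the length-`L` blocks of the three processes starting at time `t`
equal `(a, b, c)`. -/
def blockEvent (X Y Z : ℕ → Ω → 𝒳) (t L : ℕ) (a b c : Blk 𝒳 L) : Set Ω :=
  {ω | ∀ i : Fin L, X (t + i) ω = a i ∧ Y (t + i) ω = b i ∧ Z (t + i) ω = c i}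

/-- Joint stationarity of the three processes. -/
def Stationary (μ : MeasureTheory.Measure Ω) (X Y Z : ℕ → Ω → 𝒳) : Prop :=
  ∀ (t L : ℕ) (a b c : Blk 𝒳 L),
    μ (blockEvent X Y Z t L a b c) = μ (blockEvent X Y Z 0 L a b c)

/-- The joint process is Markov of order `k` with transition matrix `Q`: conditionally on the
entire past, the next joint symbol is distributed according to `Q` applied to the last
`k`-block of the past. -/
def MarkovOfOrder (μ : MeasureTheory.Measure Ω) (X Y Z : ℕ → Ω → 𝒳) (k : ℕ)
    (Q : Hist 𝒳 k → Sym 𝒳 → ℝ) : Prop :=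
  ∀ (j : ℕ) (pa pb pc : Blk 𝒳 j) (a b c : Blk 𝒳 k) (s : Sym 𝒳),
    mreal μ (blockEvent X Y Z 0 j pa pb pc ∩ blockEvent X Y Z j k a b c ∩
        {ω | X (j + k) ω = s.1 ∧ Y (j + k) ω = s.2.1 ∧ Z (j + k) ω = s.2.2})
      = Q (a, b, c) s *
        mreal μ (blockEvent X Y Z 0 j pa pb pc ∩ blockEvent X Y Z j k a b c)

/-- Assumption 3: `Y_{k+1}` is conditionally independent of the past `(Y₋∞⁰, Z₋∞⁰)` given
`(Y₁ᵏ, Z₁ᵏ⁺¹)` (stated at every time shift `j`, which by stationarity is the one-sided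
form of the two-sided statement). -/
def CondIndepPast (μ : MeasureTheory.Measure Ω) (X Y Z : ℕ → Ω → 𝒳) (k : ℕ) : Prop :=
  ∀ (j : ℕ) (py pz : Blk 𝒳 j) (b : Blk 𝒳 k) (c : Blk 𝒳 (k+1)) (y : 𝒳),
    mreal μ ({ω | Y (j + k) ω = y} ∩
        {ω | (∀ i : Fin k, Y (j + i) ω = b i) ∧ (∀ i : Fin (k+1), Z (j + i) ω = c i)} ∩
        {ω | ∀ i : Fin j, Y i ω = py i ∧ Z i ω = pz i}) *
      mreal μ {ω | (∀ i : Fin k, Y (j + i) ω = b i) ∧ (∀ i : Fin (k+1), Z (j + i) ω = c i)}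
    = mreal μ ({ω | Y (j + k) ω = y} ∩
        {ω | (∀ i : Fin k, Y (j + i) ω = b i) ∧ (∀ i : Fin (k+1), Z (j + i) ω = c i)}) *
      mreal μ ({ω | (∀ i : Fin k, Y (j + i) ω = b i) ∧ (∀ i : Fin (k+1), Z (j + i) ω = c i)} ∩
        {ω | ∀ i : Fin j, Y i ω = py i ∧ Z i ω = pz i})

/-- Measurability of the elementary events of the process. -/
def MeasProc (X Y Z : ℕ → Ω → 𝒳) : Prop :=
  ∀ (i : ℕ) (x : 𝒳), MeasurableSet {ω | X i ω = x} ∧ MeasurableSet {ω | Y i ω = x} ∧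
    MeasurableSet {ω | Z i ω = x}

/-! ### Empirical distribution, plug-in directed information, log-likelihoods -/

/-- Empirical distribution of `(k+1)`-blocks of three sample sequences of length `n`. -/
noncomputable def empDistSeq (x y z : ℕ → 𝒳) (k n : ℕ) (a b c : Blk 𝒳 (k+1)) : ℝ :=
  ((n - k : ℕ) : ℝ)⁻¹ * ∑ t ∈ Finset.range (n - k),
    if ∀ i : Fin (k+1), x (t + i) = a i ∧ y (t + i) = b i ∧ z (t + i) = c i then 1 else 0

/-- Empirical distribution of `(k+1)`-blocks of the three processes (random). -/
noncomputable def empDist (X Y Z : ℕ → Ω → 𝒳) (k n : ℕ) (a b c : Blk 𝒳 (k+1)) (ω : Ω) : ℝ :=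
  empDistSeq (fun i => X i ω) (fun i => Y i ω) (fun i => Z i ω) k n a b c

/-- The stationary `(k+1)`-block distribution `P̄`. -/
noncomputable def statDist (μ : MeasureTheory.Measure Ω) (X Y Z : ℕ → Ω → 𝒳) (k : ℕ)
    (a b c : Blk 𝒳 (k+1)) : ℝ :=
  mreal μ (blockEvent X Y Z 0 (k+1) a b c)

/-- Plug-in estimator of the directed information:
`Î_n^{(k)}(X→Y‖Z) = I(Ŷ_{k+1}; X̂₁ᵏ⁺¹ | Ŷ₁ᵏ, Ẑ₁ᵏ⁺¹)` under the empirical distribution. -/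
noncomputable def empMI (X Y Z : ℕ → Ω → 𝒳) (k n : ℕ) (ω : Ω) : ℝ :=
  condMI (fun a b c => empDist X Y Z k n a b c ω)

/-- Log-likelihood (extended-real valued) of the samples under transition matrix `Q`. -/
noncomputable def loglikSeq {k : ℕ} (Q : Hist 𝒳 k → Sym 𝒳 → ℝ) (x y z : ℕ → 𝒳) (n : ℕ) :
    EReal :=
  ∑ i ∈ Finset.Ico k n,
    elog (Q (fun j : Fin k => x (i - k + j), fun j : Fin k => y (i - k + j),
      fun j : Fin k => z (i - k + j)) (x i, y i, z i))

/-- Log-likelihood of the process samples under transition matrix `Q`. -/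
noncomputable def loglik {k : ℕ} (Q : Hist 𝒳 k → Sym 𝒳 → ℝ) (X Y Z : ℕ → Ω → 𝒳) (n : ℕ)
    (ω : Ω) : EReal :=
  loglikSeq Q (fun i => X i ω) (fun i => Y i ω) (fun i => Z i ω) n

/-- The Neyman–Pearson log-likelihood ratio `Λ_{xy,n}`: the maximal log-likelihood over all
transition matrices minus the maximal log-likelihood over the factorized (null-hypothesis)
transition matrices. -/
noncomputable def Lambda (X Y Z : ℕ → Ω → 𝒳) (k n : ℕ) (ω : Ω) : EReal :=
  sSup {L : EReal | ∃ Q : Hist 𝒳 k → Sym 𝒳 → ℝ, IsTransMat Q ∧ L = loglik Q X Y Z n ω} -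
  sSup {L : EReal | ∃ Q : Hist 𝒳 k → Sym 𝒳 → ℝ, IsTransMat Q ∧ IsFactorized Q ∧
    L = loglik Q X Y Z n ω}

/-! ### Chi-squared distribution and convergence in distribution -/

/-- The chi-squared distribution with `f` degrees of freedom: the Gamma distribution with
shape `f/2` and rate `1/2`. -/
noncomputable def chiSq (f : ℝ) : MeasureTheory.Measure ℝ :=
  ProbabilityTheory.gammaMeasure (f / 2) (1 / 2)

/-- `W n` converges in distribution (weakly) to `ν` as `n → ∞`. -/
def TendstoInDist (μ : MeasureTheory.Measure Ω) (W : ℕ → Ω → ℝ)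
    (ν : MeasureTheory.Measure ℝ) : Prop :=
  ∀ f : BoundedContinuousFunction ℝ ℝ,
    Tendsto (fun n => ∫ ω, f (W n ω) ∂μ) atTop (𝓝 (∫ x, f x ∂ν))

/-- Conditional mutual information `I(U; V | W)` of finitely-valued random variables. -/
noncomputable def cmiRV {A B C : Type*} [Fintype A] [Fintype B] [Fintype C]
    [DecidableEq A] [DecidableEq B] [DecidableEq C]
    (μ : MeasureTheory.Measure Ω) (U : Ω → A) (V : Ω → B) (W : Ω → C) : ℝ :=
  ∑ a : A, ∑ b : B, ∑ c : C,
    mreal μ {ω | U ω = a ∧ V ω = b ∧ W ω = c} *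
      Real.log ((mreal μ {ω | U ω = a ∧ V ω = b ∧ W ω = c} * mreal μ {ω | W ω = c}) /
        (mreal μ {ω | U ω = a ∧ W ω = c} * mreal μ {ω | V ω = b ∧ W ω = c}))

end DIG

/-!
Up to sign and the factor `n - k`, a log-likelihood is a cross-entropy of the empirical block
distribution, so Gibbs' inequality shows that it is maximized by the empirical conditional
distribution, with maximum `-(n - k)` times an empirical conditional entropy. A factorized
transition matrix splits the log-likelihood into two sums that can be maximized independently.
Writing `X`, `Y`, `Z` for the last symbols of three `(k + 1)`-blocks and `Xᵏ`, `Yᵏ`, `Zᵏ` for the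
symbols before them, the log-likelihood ratio is therefore `n - k` times
`H(X, Z | Xᵏ, Yᵏ, Zᵏ) + H(Y | Yᵏ, Zᵏ⁺¹) - H(X, Y, Z | Xᵏ, Yᵏ, Zᵏ)`, and the chain rule turns
this into the conditional mutual information `I(Y; Xᵏ⁺¹ | Yᵏ, Zᵏ⁺¹)`.
-/

namespace DIG

/-! ### Pushforwards of finite weights and their entropies -/

section Pushforward

variable {S T A B : Type*} [Fintype S] [DecidableEq T] [DecidableEq A] [DecidableEq B]
variable {p : S → ℝ}

lemma pushf_nonneg (hp : 0 ≤ p) (g : S → T) : 0 ≤ pushf g p := fun _ =>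
  Finset.sum_nonneg fun s _ => ite_nonneg (hp s) le_rfl

lemma le_pushf_apply (hp : 0 ≤ p) (g : S → T) (s : S) : p s ≤ pushf g p (g s) := by
  simpa [pushf] using Finset.single_le_sum (f := fun s' => if g s' = g s then p s' else 0)
    (fun s' _ => ite_nonneg (hp s') le_rfl) (Finset.mem_univ s)

lemma pushf_apply_pos (hp : 0 ≤ p) (g : S → T) {s : S} (hs : p s ≠ 0) : 0 < pushf g p (g s) :=
  ((hp s).lt_of_ne' hs).trans_le (le_pushf_apply hp g s)

lemma exists_ne_zero_of_pushf_ne_zero {g : S → T} {t : T} (ht : pushf g p t ≠ 0) :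
    ∃ s, p s ≠ 0 ∧ g s = t := by
  obtain ⟨s, -, hs⟩ := Finset.exists_ne_zero_of_sum_ne_zero ht
  rw [ne_eq, ite_eq_right_iff, Classical.not_imp] at hs
  exact ⟨s, hs.2, hs.1⟩

lemma sum_pushf_mul [Fintype T] (g : S → T) (f : T → ℝ) :
    ∑ t, pushf g p t * f t = ∑ s, p s * f (g s) := by
  simp only [pushf, Finset.sum_mul]
  rw [Finset.sum_comm]
  simp [ite_mul]

lemma pushf_pushf [Fintype T] (g : S → T) (h : T → A) :
    pushf h (pushf g p) = pushf (h ∘ g) p := by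
  ext a
  simpa [pushf] using sum_pushf_mul (p := p) g fun t => if h t = a then 1 else 0

lemma pushf_snd [Fintype T] (q : S × T → ℝ) (t : T) : pushf Prod.snd q t = ∑ s, q (s, t) := by
  simp [pushf, Fintype.sum_prod_type]

lemma pushf_apply_of_injective {g : S → T} (hg : g.Injective) (s : S) : pushf g p (g s) = p s := by
  classical
  simp [pushf, hg.eq_iff]

lemma pushf_id [DecidableEq S] : pushf id p = p := by
  ext s
  simp [pushf]

lemma sum_pushf_prodMk [Fintype B] (u : S → A) (v : S → B) (a : A) :
    ∑ b, pushf (fun s => (u s, v s)) p (a, b) = pushf u p a := by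
  simp only [pushf, Prod.mk.injEq]
  rw [Finset.sum_comm]
  simp [ite_and]

lemma hent_pushf [Fintype T] (g : S → T) :
    Hent (pushf g p) = -∑ s, p s * Real.log (pushf g p (g s)) := by
  rw [Hent, sum_pushf_mul]

lemma hent_pushf_congr [Fintype A] [Fintype B] {u : S → A} {v : S → B}
    (huv : ∀ s s', u s = u s' ↔ v s = v s') : Hent (pushf u p) = Hent (pushf v p) := by
  simp only [hent_pushf, pushf, huv]

lemma hent_pushf_of_injective [Fintype T] {g : S → T} (hg : g.Injective) :
    Hent (pushf g p) = Hent p := by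
  classical
  rw [hent_pushf_congr (u := g) (v := id) fun _ _ => hg.eq_iff, pushf_id]

end Pushforward

/-! ### Gibbs' inequality -/

lemma sub_le_mul_log_div {a b : ℝ} (ha : 0 ≤ a) (hb : 0 ≤ b) (hab : b = 0 → a = 0) :
    a - b ≤ a * Real.log (a / b) := by
  rcases ha.eq_or_lt with rfl | ha
  · simpa using hb
  have hb : 0 < b := hb.lt_of_ne' fun h => ha.ne' (hab h)
  calc a - b = a * (1 - (a / b)⁻¹) := by field_simp
    _ ≤ a * Real.log (a / b) := by gcongr; exact Real.one_sub_inv_le_log_of_pos (by positivity)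

lemma klfin_nonneg {S : Type*} [Fintype S] {p q : S → ℝ} (hp : 0 ≤ p) (hq : 0 ≤ q)
    (hpq : ∀ s, q s = 0 → p s = 0) (hsum : ∑ s, q s ≤ ∑ s, p s) : 0 ≤ KLfin p q := by
  calc 0 ≤ ∑ s, (p s - q s) := by rw [Finset.sum_sub_distrib]; exact sub_nonneg.2 hsum
    _ ≤ KLfin p q := Finset.sum_le_sum fun s _ => sub_le_mul_log_div (hp s) (hq s) (hpq s)

/-! ### Conditional entropy and stochastic kernels -/

/-- A stochastic kernel between finite types, as a matrix whose rows are probability vectors. -/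
def IsStochastic {A B : Type*} [Fintype B] (W : A → B → ℝ) : Prop :=
  (∀ a b, 0 ≤ W a b) ∧ ∀ a, ∑ b, W a b = 1

section ConditionalEntropy

variable {S T A B : Type*} [Fintype S] [Fintype B] [DecidableEq A] [DecidableEq B]
variable {p : S → ℝ} {W : A → B → ℝ}

/-- Conditional distribution of `v` given `u` under the weight `p`. Rows of zero weight are filled
with the uniform distribution, so that the result is always a stochastic kernel. -/
noncomputable def condDist (p : S → ℝ) (v : S → B) (u : S → A) (a : A) (b : B) : ℝ :=
  if pushf u p a = 0 then (Fintype.card B : ℝ)⁻¹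
  else pushf (fun s => (u s, v s)) p (a, b) / pushf u p a

lemma isStochastic_condDist [Nonempty B] (hp : 0 ≤ p) (v : S → B) (u : S → A) :
    IsStochastic (condDist p v u) := by
  refine ⟨fun a b => ite_nonneg (by positivity)
    (div_nonneg (pushf_nonneg hp _ _) (pushf_nonneg hp u a)), fun a => ?_⟩
  by_cases ha : pushf u p a = 0
  · simp [condDist, ha]
  · simp only [condDist, if_neg ha, ← Finset.sum_div, sum_pushf_prodMk, div_self ha]

lemma condDist_apply_of_ne_zero (hp : 0 ≤ p) (v : S → B) (u : S → A) {s : S} (hs : p s ≠ 0) :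
    condDist p v u (u s) (v s) =
      pushf (fun s => (u s, v s)) p (u s, v s) / pushf u p (u s) :=
  if_neg (pushf_apply_pos hp u hs).ne'

lemma condDist_apply_pos (hp : 0 ≤ p) (v : S → B) (u : S → A) {s : S} (hs : p s ≠ 0) :
    0 < condDist p v u (u s) (v s) := by
  rw [condDist_apply_of_ne_zero hp v u hs]
  exact div_pos (pushf_apply_pos hp (fun s => (u s, v s)) hs) (pushf_apply_pos hp u hs)

variable [Fintype A]

/-- Conditional entropy `H(v | u)` of the random variables `u` and `v` under the weight `p`,
defined through the chain rule as `H(u, v) - H(u)`. -/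
noncomputable def condEnt (p : S → ℝ) (v : S → B) (u : S → A) : ℝ :=
  Hent (pushf (fun s => (u s, v s)) p) - Hent (pushf u p)

lemma condEnt_pushf [Fintype T] [DecidableEq T] (g : S → T) (v : T → B) (u : T → A) :
    condEnt (pushf g p) v u = condEnt p (v ∘ g) (u ∘ g) := by
  simp only [condEnt, pushf_pushf]
  rfl

lemma condEnt_eq_neg_sum (v : S → B) (u : S → A) :
    condEnt p v u = -∑ s, p s * (Real.log (pushf (fun s => (u s, v s)) p (u s, v s)) -
      Real.log (pushf u p (u s))) := by
  simp only [condEnt, hent_pushf, mul_sub, Finset.sum_sub_distrib]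
  ring

lemma klfin_pushf_mul (hp : 0 ≤ p) (v : S → B) (u : S → A)
    (hW : ∀ s, p s ≠ 0 → 0 < W (u s) (v s)) :
    KLfin (pushf (fun s => (u s, v s)) p) (fun ab => pushf u p ab.1 * W ab.1 ab.2) =
      -condEnt p v u - ∑ s, p s * Real.log (W (u s) (v s)) := by
  rw [KLfin, sum_pushf_mul, condEnt_eq_neg_sum, neg_neg, ← Finset.sum_sub_distrib]
  refine Finset.sum_congr rfl fun s _ => ?_
  rcases eq_or_ne (p s) 0 with hs | hs
  · simp [hs]
  have huv : 0 < pushf (fun s => (u s, v s)) p (u s, v s) := pushf_apply_pos hp _ hs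
  have hu : 0 < pushf u p (u s) := pushf_apply_pos hp u hs
  rw [Real.log_div huv.ne' (mul_pos hu (hW s hs)).ne', Real.log_mul hu.ne' (hW s hs).ne']
  ring

lemma sum_mul_log_le_neg_condEnt (hp : 0 ≤ p) (v : S → B) (u : S → A) (hW : IsStochastic W)
    (hpos : ∀ s, p s ≠ 0 → 0 < W (u s) (v s)) :
    ∑ s, p s * Real.log (W (u s) (v s)) ≤ -condEnt p v u := by
  have hkl : 0 ≤ KLfin (pushf (fun s => (u s, v s)) p)
      (fun ab => pushf u p ab.1 * W ab.1 ab.2) := by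
    refine klfin_nonneg (pushf_nonneg hp _)
      (fun ab => mul_nonneg (pushf_nonneg hp u _) (hW.1 _ _)) (fun ab hab => ?_) (le_of_eq ?_)
    · by_contra hne
      obtain ⟨s, hs, rfl⟩ := exists_ne_zero_of_pushf_ne_zero hne
      exact (mul_pos (pushf_apply_pos hp u hs) (hpos s hs)).ne' hab
    · simp only [Fintype.sum_prod_type, ← Finset.mul_sum, hW.2, mul_one, sum_pushf_prodMk]
  rw [klfin_pushf_mul hp v u hpos] at hkl
  linarith

lemma sum_mul_log_condDist (hp : 0 ≤ p) (v : S → B) (u : S → A) :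
    ∑ s, p s * Real.log (condDist p v u (u s) (v s)) = -condEnt p v u := by
  rw [condEnt_eq_neg_sum, neg_neg]
  refine Finset.sum_congr rfl fun s _ => ?_
  rcases eq_or_ne (p s) 0 with hs | hs
  · simp [hs]
  · rw [condDist_apply_of_ne_zero hp v u hs,
      Real.log_div (pushf_apply_pos hp (fun s => (u s, v s)) hs).ne' (pushf_apply_pos hp u hs).ne']

end ConditionalEntropy

/-! ### Maximal log-likelihoods of a finite sample -/

/-- The uniform probability weight on the sample indices; its pushforward along a sample is the
empirical distribution. -/
noncomputable def uniformWeight (ι : Type*) [Fintype ι] : ι → ℝ := fun _ => (Fintype.card ι : ℝ)⁻¹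

section ExtendedLog

variable {ι : Type*} {s : Finset ι} {f : ι → ℝ}

lemma ereal_coe_sum (s : Finset ι) (f : ι → ℝ) :
    ((∑ i ∈ s, f i : ℝ) : EReal) = ∑ i ∈ s, (f i : EReal) :=
  map_sum (⟨⟨Real.toEReal, EReal.coe_zero⟩, EReal.coe_add⟩ : ℝ →+ EReal) f s

lemma sum_elog_of_pos (hf : ∀ i ∈ s, 0 < f i) :
    ∑ i ∈ s, elog (f i) = ((∑ i ∈ s, Real.log (f i) : ℝ) : EReal) := by
  rw [ereal_coe_sum]
  exact Finset.sum_congr rfl fun i hi => if_neg (hf i hi).not_ge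

lemma sum_elog_le {r : ℝ} (hr : (∀ i ∈ s, 0 < f i) → ∑ i ∈ s, Real.log (f i) ≤ r) :
    ∑ i ∈ s, elog (f i) ≤ (r : EReal) := by
  by_cases hf : ∀ i ∈ s, 0 < f i
  · rw [sum_elog_of_pos hf]
    exact EReal.coe_le_coe_iff.2 (hr hf)
  · push Not at hf
    obtain ⟨i, hi, hfi⟩ := hf
    rw [← Finset.add_sum_erase _ _ hi, elog, if_pos hfi, EReal.bot_add]
    exact bot_le

end ExtendedLog

section UniformWeight

variable {ι : Type*} [Fintype ι]

lemma uniformWeight_nonneg : 0 ≤ uniformWeight ι := fun _ => by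
  simp [uniformWeight]

variable [Nonempty ι]

lemma uniformWeight_ne_zero (i : ι) : uniformWeight ι i ≠ 0 := by
  simp [uniformWeight]

lemma card_mul_sum_uniformWeight_mul (f : ι → ℝ) :
    Fintype.card ι * ∑ i, uniformWeight ι i * f i = ∑ i, f i := by
  simp [uniformWeight, ← Finset.mul_sum]

end UniformWeight

section Likelihood

variable {ι A B A' B' : Type*} [Fintype ι] [Nonempty ι]
variable [Fintype A] [Fintype B] [Fintype A'] [Fintype B']
variable [DecidableEq A] [DecidableEq B] [DecidableEq A'] [DecidableEq B']

lemma sum_log_le_neg_card_mul_condEnt {W : A → B → ℝ} (hW : IsStochastic W)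
    (v : ι → B) (u : ι → A) (hpos : ∀ i, 0 < W (u i) (v i)) :
    ∑ i, Real.log (W (u i) (v i)) ≤ -(Fintype.card ι * condEnt (uniformWeight ι) v u) := by
  rw [← card_mul_sum_uniformWeight_mul, ← mul_neg]
  gcongr
  exact sum_mul_log_le_neg_condEnt uniformWeight_nonneg v u hW fun i _ => hpos i

lemma sum_log_condDist_uniformWeight (v : ι → B) (u : ι → A) :
    ∑ i, Real.log (condDist (uniformWeight ι) v u (u i) (v i)) =
      -(Fintype.card ι * condEnt (uniformWeight ι) v u) := by
  rw [← card_mul_sum_uniformWeight_mul, sum_mul_log_condDist uniformWeight_nonneg, mul_neg]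

lemma isGreatest_sum_elog [Nonempty B] (v : ι → B) (u : ι → A) :
    IsGreatest {L : EReal | ∃ W : A → B → ℝ, IsStochastic W ∧ L = ∑ i, elog (W (u i) (v i))}
      ((-(Fintype.card ι * condEnt (uniformWeight ι) v u) : ℝ) : EReal) := by
  constructor
  · refine ⟨condDist (uniformWeight ι) v u, isStochastic_condDist uniformWeight_nonneg v u, ?_⟩
    rw [sum_elog_of_pos fun i _ =>
      condDist_apply_pos uniformWeight_nonneg v u (uniformWeight_ne_zero i),
      sum_log_condDist_uniformWeight]
  · rintro L ⟨W, hW, rfl⟩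
    exact sum_elog_le fun hpos =>
      sum_log_le_neg_card_mul_condEnt hW v u fun i => hpos i (Finset.mem_univ i)

lemma isGreatest_sum_elog_mul [Nonempty B] [Nonempty B'] (v : ι → B) (u : ι → A)
    (v' : ι → B') (u' : ι → A') :
    IsGreatest {L : EReal | ∃ (W : A → B → ℝ) (W' : A' → B' → ℝ),
        IsStochastic W ∧ IsStochastic W' ∧ L = ∑ i, elog (W (u i) (v i) * W' (u' i) (v' i))}
      ((-(Fintype.card ι * (condEnt (uniformWeight ι) v u + condEnt (uniformWeight ι) v' u')) : ℝ) :
        EReal) := by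
  have sum_log_mul {f g : ι → ℝ} (hf : ∀ i, 0 < f i) (hg : ∀ i, 0 < g i) :
      ∑ i, Real.log (f i * g i) = ∑ i, Real.log (f i) + ∑ i, Real.log (g i) := by
    rw [← Finset.sum_add_distrib]
    exact Finset.sum_congr rfl fun i _ => Real.log_mul (hf i).ne' (hg i).ne'
  rw [mul_add, neg_add]
  constructor
  · have hpos (i : ι) := condDist_apply_pos uniformWeight_nonneg v u (uniformWeight_ne_zero i)
    have hpos' (i : ι) := condDist_apply_pos uniformWeight_nonneg v' u' (uniformWeight_ne_zero i)
    refine ⟨condDist (uniformWeight ι) v u, condDist (uniformWeight ι) v' u',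
      isStochastic_condDist uniformWeight_nonneg v u,
      isStochastic_condDist uniformWeight_nonneg v' u', ?_⟩
    rw [sum_elog_of_pos fun i _ => mul_pos (hpos i) (hpos' i), sum_log_mul hpos hpos',
      sum_log_condDist_uniformWeight, sum_log_condDist_uniformWeight]
  · rintro L ⟨W, W', hW, hW', rfl⟩
    refine sum_elog_le fun hprod => ?_
    have hpos (i : ι) : 0 < W (u i) (v i) :=
      pos_of_mul_pos_left (hprod i (Finset.mem_univ i)) (hW'.1 _ _)
    have hpos' (i : ι) : 0 < W' (u' i) (v' i) :=
      pos_of_mul_pos_right (hprod i (Finset.mem_univ i)) (hW.1 _ _)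
    rw [sum_log_mul hpos hpos']
    exact add_le_add (sum_log_le_neg_card_mul_condEnt hW v u hpos)
      (sum_log_le_neg_card_mul_condEnt hW' v' u' hpos')

end Likelihood

section FactorizedLikelihood

variable {𝒳 : Type*} [Fintype 𝒳] {k : ℕ}

lemma IsFactorized.isTransMat {Q : Hist 𝒳 k → Sym 𝒳 → ℝ} (hQ : IsFactorized Q) :
    IsTransMat Q := by
  obtain ⟨Q1, Q2, hQ1, hQ1_sum, hQ2, hQ2_sum, hQ⟩ := hQ
  refine ⟨fun ⟨a, b, c⟩ ⟨x, y, z⟩ => hQ a b c x y z ▸ mul_nonneg (hQ1 _ _) (hQ2 _ _),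
    fun ⟨a, b, c⟩ => ?_⟩
  calc ∑ s, Q (a, b, c) s
      = ∑ x, ∑ z, ∑ y, Q1 (a, b, c) (x, z) * Q2 (b, Fin.snoc c z) y := by
        simp only [Fintype.sum_prod_type, hQ]
        exact Finset.sum_congr rfl fun x _ => Finset.sum_comm
    _ = ∑ x, ∑ z, Q1 (a, b, c) (x, z) := by simp only [← Finset.mul_sum, hQ2_sum, mul_one]
    _ = 1 := by rw [← hQ1_sum (a, b, c), Fintype.sum_prod_type]

lemma exists_isFactorized_iff {ι : Type*} [Fintype ι] (h : ι → Hist 𝒳 k) (s : ι → Sym 𝒳)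
    (L : EReal) :
    (∃ Q : Hist 𝒳 k → Sym 𝒳 → ℝ, IsTransMat Q ∧ IsFactorized Q ∧ L = ∑ i, elog (Q (h i) (s i))) ↔
      ∃ (Q1 : Hist 𝒳 k → 𝒳 × 𝒳 → ℝ) (Q2 : Blk 𝒳 k × Blk 𝒳 (k + 1) → 𝒳 → ℝ),
        IsStochastic Q1 ∧ IsStochastic Q2 ∧
        L = ∑ i, elog (Q1 (h i) ((s i).1, (s i).2.2) *
          Q2 ((h i).2.1, Fin.snoc (h i).2.2 (s i).2.2) (s i).2.1) := by
  constructor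
  · rintro ⟨Q, -, ⟨Q1, Q2, hQ1, hQ1_sum, hQ2, hQ2_sum, hQ⟩, rfl⟩
    exact ⟨Q1, Q2, ⟨hQ1, hQ1_sum⟩, ⟨hQ2, hQ2_sum⟩,
      Finset.sum_congr rfl fun i _ => congrArg elog (hQ _ _ _ _ _ _)⟩
  · rintro ⟨Q1, Q2, hQ1, hQ2, rfl⟩
    have hQ : IsFactorized fun (h : Hist 𝒳 k) (s : Sym 𝒳) =>
        Q1 h (s.1, s.2.2) * Q2 (h.2.1, Fin.snoc h.2.2 s.2.2) s.2.1 :=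
      ⟨Q1, Q2, hQ1.1, hQ1.2, hQ2.1, hQ2.2, fun _ _ _ _ _ _ => rfl⟩
    exact ⟨_, hQ.isTransMat, hQ, rfl⟩

end FactorizedLikelihood

/-! ### Splitting a block into its past and its present -/

section Blocks

variable {𝒳 : Type*} {k : ℕ}

/-- The first `k` symbols of three `(k + 1)`-blocks. -/
def past (s : Hist 𝒳 (k + 1)) : Hist 𝒳 k := (Fin.init s.1, Fin.init s.2.1, Fin.init s.2.2)

/-- The last symbols of three `(k + 1)`-blocks. -/
def present (s : Hist 𝒳 (k + 1)) : Sym 𝒳 :=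
  (s.1 (Fin.last k), s.2.1 (Fin.last k), s.2.2 (Fin.last k))

lemma snoc_past_present (s : Hist 𝒳 (k + 1)) :
    (Fin.snoc (past s).2.2 (present s).2.2 : Blk 𝒳 (k + 1)) = s.2.2 :=
  Fin.snoc_init_self s.2.2

lemma eq_iff_init_eq_and_last_eq {a b : Blk 𝒳 (k + 1)} :
    a = b ↔ Fin.init a = Fin.init b ∧ a (Fin.last k) = b (Fin.last k) := by
  rw [← Fin.snoc_inj (α := fun _ => 𝒳), Fin.snoc_init_self, Fin.snoc_init_self]

variable [Fintype 𝒳] [DecidableEq 𝒳] {w : Hist 𝒳 (k + 1) → ℝ}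

lemma margYZ_eq_pushf (b c : Blk 𝒳 (k + 1)) :
    margYZ (fun a b c => w (a, b, c)) b c = pushf Prod.snd w (b, c) :=
  (pushf_snd w (b, c)).symm

lemma margXYkZ_eq_pushf (a : Blk 𝒳 (k + 1)) (β : Blk 𝒳 k) (c : Blk 𝒳 (k + 1)) :
    margXYkZ (fun a b c => w (a, b, c)) a β c =
      pushf (fun s => (s.1, Fin.init s.2.1, s.2.2)) w (a, β, c) := by
  let splitY (s : Hist 𝒳 (k + 1)) := ((s.1, Fin.init s.2.1, s.2.2), s.2.1 (Fin.last k))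
  have splitY_injective : splitY.Injective := fun s s' => by
    simp only [splitY, Prod.ext_iff, eq_iff_init_eq_and_last_eq (a := s.2.1)]
    tauto
  calc margXYkZ (fun a b c => w (a, b, c)) a β c
      = ∑ y, pushf splitY w ((a, β, c), y) := Finset.sum_congr rfl fun y _ => by
        have := pushf_apply_of_injective (p := w) splitY_injective (a, Fin.snoc β y, c)
        simpa only [splitY, Fin.init_snoc (α := fun _ => 𝒳), Fin.snoc_last] using this.symm
    _ = pushf (fun s => (s.1, Fin.init s.2.1, s.2.2)) w (a, β, c) := sum_pushf_prodMk _ _ _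

lemma margYkZ_eq_pushf (β : Blk 𝒳 k) (c : Blk 𝒳 (k + 1)) :
    margYkZ (fun a b c => w (a, b, c)) β c =
      pushf (fun s => (Fin.init s.2.1, s.2.2)) w (β, c) := by
  calc margYkZ (fun a b c => w (a, b, c)) β c
      = ∑ a, pushf (fun s => (s.1, Fin.init s.2.1, s.2.2)) w (a, β, c) :=
        Finset.sum_congr rfl fun a _ => margXYkZ_eq_pushf a β c
    _ = pushf (fun s => (Fin.init s.2.1, s.2.2)) w (β, c) := by
        rw [← pushf_snd, pushf_pushf]
        rfl

lemma condMI_eq_sum :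
    condMI (fun a b c => w (a, b, c)) =
      ∑ s, w s * Real.log
        ((w s * pushf (fun s => (Fin.init s.2.1, s.2.2)) w (Fin.init s.2.1, s.2.2)) /
          (pushf Prod.snd w s.2 *
            pushf (fun s => (s.1, Fin.init s.2.1, s.2.2)) w (s.1, Fin.init s.2.1, s.2.2))) := by
  simp only [condMI, margYZ_eq_pushf, margXYkZ_eq_pushf, margYkZ_eq_pushf, Fintype.sum_prod_type]

lemma condMI_eq_hent (hw : 0 ≤ w) :
    condMI (fun a b c => w (a, b, c)) =
      Hent (pushf Prod.snd w) + Hent (pushf (fun s => (s.1, Fin.init s.2.1, s.2.2)) w) -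
        Hent w - Hent (pushf (fun s => (Fin.init s.2.1, s.2.2)) w) := by
  rw [condMI_eq_sum, hent_pushf, hent_pushf, hent_pushf, Hent]
  simp only [← Finset.sum_neg_distrib, ← Finset.sum_add_distrib, ← Finset.sum_sub_distrib]
  refine Finset.sum_congr rfl fun s _ => ?_
  rcases eq_or_ne (w s) 0 with hs | hs
  · simp [hs]
  have hYZ := (pushf_apply_pos hw Prod.snd hs).ne'
  have hXYkZ := (pushf_apply_pos hw (fun s => (s.1, Fin.init s.2.1, s.2.2)) hs).ne'
  have hYkZ := (pushf_apply_pos hw (fun s => (Fin.init s.2.1, s.2.2)) hs).ne'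
  rw [Real.log_div (mul_ne_zero hs hYkZ) (mul_ne_zero hYZ hXYkZ), Real.log_mul hs hYkZ,
    Real.log_mul hYZ hXYkZ]
  ring

lemma condMI_eq_condEnt (hw : 0 ≤ w) :
    condMI (fun a b c => w (a, b, c)) =
      condEnt w (fun s => ((present s).1, (present s).2.2)) past +
        condEnt w (fun s => (present s).2.1) (fun s => (Fin.init s.2.1, s.2.2)) -
        condEnt w present past := by
  have hXYZ : Hent (pushf (fun s => (past s, present s)) w) = Hent w :=
    hent_pushf_of_injective fun s s' => by
      simp only [past, present, Prod.ext_iff, eq_iff_init_eq_and_last_eq]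
      tauto
  have hXYkZ : Hent (pushf (fun s => (past s, (present s).1, (present s).2.2)) w) =
      Hent (pushf (fun s => (s.1, Fin.init s.2.1, s.2.2)) w) :=
    hent_pushf_congr fun s s' => by
      simp only [past, present, Prod.mk.injEq, eq_iff_init_eq_and_last_eq]
      tauto
  have hYZ : Hent (pushf (fun s => ((Fin.init s.2.1, s.2.2), (present s).2.1)) w) =
      Hent (pushf Prod.snd w) :=
    hent_pushf_congr fun s s' => by
      simp only [present, Prod.ext_iff, eq_iff_init_eq_and_last_eq]
      tauto
  rw [condMI_eq_hent hw, condEnt, condEnt, condEnt, hXYZ, hXYkZ, hYZ]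
  ring

end Blocks

/-! ### Sample paths -/

section SamplePath

variable {𝒳 : Type*} (x y z : ℕ → 𝒳) (k n : ℕ)

/-- The `n - k` consecutive `(k + 1)`-blocks of three sample paths of length `n`. -/
def pathBlocks (t : Fin (n - k)) : Hist 𝒳 (k + 1) :=
  (fun i => x (t + i), fun i => y (t + i), fun i => z (t + i))

lemma loglikSeq_eq_sum_pathBlocks (Q : Hist 𝒳 k → Sym 𝒳 → ℝ) :
    loglikSeq Q x y z n = ∑ t, elog (Q (past (pathBlocks x y z k n t))
      (present (pathBlocks x y z k n t))) := by
  rw [loglikSeq, Finset.sum_Ico_eq_sum_range, Finset.sum_range]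
  refine Finset.sum_congr rfl fun t _ => ?_
  rw [Nat.add_sub_cancel_left, Nat.add_comm k]
  rfl

variable [DecidableEq 𝒳]

/-- The empirical block distribution `empDistSeq` as a single weight on triples of blocks. -/
noncomputable def empWeight : Hist 𝒳 (k + 1) → ℝ :=
  pushf (pathBlocks x y z k n) (uniformWeight (Fin (n - k)))

lemma empWeight_nonneg : 0 ≤ empWeight x y z k n := pushf_nonneg uniformWeight_nonneg _

lemma empDistSeq_eq_empWeight :
    empDistSeq x y z k n = fun a b c => empWeight x y z k n (a, b, c) := by
  ext a b c
  simp only [empDistSeq, empWeight, pushf, pathBlocks, uniformWeight, Finset.sum_range,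
    Finset.mul_sum, Fintype.card_fin, mul_ite, mul_one, mul_zero, Prod.mk.injEq, funext_iff,
    forall_and]

variable {k n} [Fintype 𝒳]

lemma isGreatest_loglikSeq (hn : k < n) :
    IsGreatest {L : EReal | ∃ Q : Hist 𝒳 k → Sym 𝒳 → ℝ, IsTransMat Q ∧ L = loglikSeq Q x y z n}
      ((-((n - k : ℕ) * condEnt (empWeight x y z k n) present past) : ℝ) : EReal) := by
  have : Nonempty 𝒳 := ⟨x 0⟩
  have : NeZero (n - k) := ⟨Nat.sub_ne_zero_of_lt hn⟩
  simp only [loglikSeq_eq_sum_pathBlocks, empWeight, condEnt_pushf]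
  have hmax := isGreatest_sum_elog (present ∘ pathBlocks x y z k n) (past ∘ pathBlocks x y z k n)
  rw [Fintype.card_fin] at hmax
  exact hmax

lemma isGreatest_loglikSeq_isFactorized (hn : k < n) :
    IsGreatest {L : EReal | ∃ Q : Hist 𝒳 k → Sym 𝒳 → ℝ,
        IsTransMat Q ∧ IsFactorized Q ∧ L = loglikSeq Q x y z n}
      ((-((n - k : ℕ) *
        (condEnt (empWeight x y z k n) (fun s => ((present s).1, (present s).2.2)) past +
          condEnt (empWeight x y z k n) (fun s => (present s).2.1)
            (fun s => (Fin.init s.2.1, s.2.2)))) : ℝ) : EReal) := by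
  have : Nonempty 𝒳 := ⟨x 0⟩
  have : NeZero (n - k) := ⟨Nat.sub_ne_zero_of_lt hn⟩
  simp only [loglikSeq_eq_sum_pathBlocks, exists_isFactorized_iff, snoc_past_present, empWeight,
    condEnt_pushf]
  have hmax := isGreatest_sum_elog_mul
    ((fun s => ((present s).1, (present s).2.2)) ∘ pathBlocks x y z k n)
    (past ∘ pathBlocks x y z k n)
    ((fun s => (present s).2.1) ∘ pathBlocks x y z k n)
    ((fun s => (Fin.init s.2.1, s.2.2)) ∘ pathBlocks x y z k n)
  rw [Fintype.card_fin] at hmax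
  exact hmax

end SamplePath

/-- For every `n > k` and every sample path, the Neyman–Pearson
log-likelihood ratio equals `(n-k)` times the plug-in estimator of directed information:
`Λ_{xy,n} = (n−k)·Î_n^{(k)}(X→Y‖Z)`. -/
theorem lambda_eq_plugin_directed_info
    {𝒳 : Type*} [Fintype 𝒳] [DecidableEq 𝒳] [Nonempty 𝒳]
    {Ω : Type*} [MeasurableSpace Ω]
    (X Y Z : ℕ → Ω → 𝒳) (k n : ℕ) (hn : k < n) (ω : Ω) :
    Lambda X Y Z k n ω = ((((n - k : ℕ) : ℝ) * empMI X Y Z k n ω : ℝ) : EReal) := by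
  unfold Lambda empMI loglik empDist
  rw [(isGreatest_loglikSeq _ _ _ hn).csSup_eq,
    (isGreatest_loglikSeq_isFactorized _ _ _ hn).csSup_eq, ← EReal.coe_sub,
    empDistSeq_eq_empWeight, condMI_eq_condEnt (empWeight_nonneg _ _ _ k n)]
  congr 1
  ring

end DIG
end

section
/- Under Assumptions 1–3, if the edge X→Y is present (v_xy = 1), so that Ī_xy := I(Ȳ_{k+1}; X̄_1^{k+1} | Ȳ_1^k, Z̄_1^{k+1}) > 0 under the stationary distribution of (k+1)-blocks, then there exists a finite σ² ≥ 0 such that √(n−k)·(Î_n^{(k)}(X→Y‖Z) − Ī_xy) converges in distribution to the Gaussian N(0, σ²) as n → ∞. -/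
open MeasureTheory Filter Finset
open scoped BigOperators Topology ENNReal NNReal Classical

/-!
The `(k + 1)`-blocks of the joint process form an irreducible finite Markov chain. For an observable
`f` of this chain with mean zero, solving the Poisson equation twice produces functions `g` and `h`
such that `1 + iεg - (ε²/2)h` is, up to `O(ε³)`, an eigenvector of the tilted operator `exp(iεf)P`
with eigenvalue `1 - (ε²/2)v`. Hence the characteristic function of the sum of the first `n` values
of `f` at `ε = t / √n` is `(1 - t²v/(2n))ⁿ + o(1)`, which tends to that of `N(0, v)`. Since the
stationary block law is strictly positive, conditional mutual information is differentiable there,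
and the delta method carries the central limit theorem for the empirical block frequencies over to
the plug-in estimator.
-/

namespace DIG

/-! ### Irreducible stochastic matrices -/

section StochasticMatrix

open Matrix

variable {S : Type*} [Fintype S]

lemma pow_mulVec_eq_self [DecidableEq S] {R : Type*} [Semiring R] {P : Matrix S S R} {g : S → R}
    (hg : P *ᵥ g = g) (n : ℕ) : P ^ n *ᵥ g = g := by
  induction n with
  | zero => simp
  | succ n ih => rw [pow_succ, ← mulVec_mulVec, hg, ih]

lemma vecMul_pow_eq_self [DecidableEq S] {R : Type*} [Semiring R] {P : Matrix S S R} {π : S → R}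
    (hπP : π ᵥ* P = π) (n : ℕ) : π ᵥ* P ^ n = π := by
  induction n with
  | zero => simp
  | succ n ih => rw [pow_succ, ← vecMul_vecMul, ih, hπP]

lemma pow_apply_pos_of_path [DecidableEq S] {P : Matrix S S ℝ}
    (hP : ∀ x y, 0 ≤ P x y) {z : ℕ → S} (hz : ∀ t, 0 < P (z t) (z (t + 1))) (n : ℕ) :
    0 < (P ^ n) (z 0) (z n) := by
  induction n with
  | zero => simp
  | succ n ih =>
    rw [pow_succ, mul_apply]
    exact sum_pos' (fun x _ ↦ mul_nonneg (pow_apply_nonneg hP n _ x) (hP x _))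
      ⟨z n, mem_univ _, mul_pos ih (hz n)⟩

variable {P : Matrix S S ℝ} {π f g h : S → ℝ}

lemma pos_of_vecMul_eq_self (hirr : P.IsIrreducible) (hπ : π ∈ stdSimplex ℝ S)
    (hπP : π ᵥ* P = π) (y : S) : 0 < π y := by
  obtain ⟨x, -, hx⟩ : ∃ x ∈ univ, 0 < π x := exists_lt_of_sum_lt (by simp [hπ.2])
  obtain ⟨n, -, hn⟩ := (isIrreducible_iff_exists_pow_pos hirr.nonneg).1 hirr x y
  rw [← congrFun (vecMul_pow_eq_self hπP n) y]
  have hPn (z : S) : 0 ≤ (P ^ n) z y := Matrix.pow_apply_nonneg hirr.nonneg n z y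
  exact sum_pos' (fun z _ ↦ mul_nonneg (hπ.1 z) (hPn z)) ⟨x, mem_univ x, mul_pos hx hn⟩

variable [DecidableEq S]

/- Maximum principle: at a maximum `m` of `g`, every iterate of `P` averages `g` to its maximal
value `g m`, so `g` takes that value wherever some power of `P` puts mass. -/
lemma harmonic_apply_eq (hP : P ∈ rowStochastic ℝ S) (hirr : P.IsIrreducible)
    (hg : P *ᵥ g = g) (x y : S) : g x = g y := by
  have : Nonempty S := ⟨x⟩
  obtain ⟨m, hm⟩ := Finite.exists_max g
  suffices ∀ z, g z = g m from (this x).trans (this y).symm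
  intro z
  obtain ⟨n, -, hn⟩ := (isIrreducible_iff_exists_pow_pos hirr.nonneg).1 hirr m z
  have hPn : P ^ n ∈ rowStochastic ℝ S := pow_mem hP n
  have hterm : ∀ w ∈ univ, 0 ≤ (P ^ n) m w * (g m - g w) := fun w _ ↦
    mul_nonneg (nonneg_of_mem_rowStochastic hPn) (sub_nonneg.2 (hm w))
  have hsum : ∑ w, (P ^ n) m w * (g m - g w) = 0 := by
    have hmean : ∑ w, (P ^ n) m w * g w = g m := congrFun (pow_mulVec_eq_self hg n) m
    simp only [mul_sub, sum_sub_distrib, ← sum_mul, sum_row_of_mem_rowStochastic hPn, hmean,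
      one_mul, sub_self]
  have hz := (sum_eq_zero_iff_of_nonneg hterm).1 hsum z (mem_univ z)
  linarith [(mul_eq_zero.1 hz).resolve_left hn.ne']

/- Adding the rank-one projection onto the constants removes the kernel of `1 - P` without
changing the equation on `π`-centred functions. -/
lemma exists_sub_mulVec_eq (hP : P ∈ rowStochastic ℝ S) (hirr : P.IsIrreducible)
    (hπ : π ⬝ᵥ 1 = 1) (hπP : π ᵥ* P = π) (hf : π ⬝ᵥ f = 0) : ∃ g, g - P *ᵥ g = f := by
  have hmul (g : S → ℝ) : (1 - P + replicateRow S π) *ᵥ g = g - P *ᵥ g + (π ⬝ᵥ g) • 1 := by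
    rw [add_mulVec, sub_mulVec, one_mulVec]
    ext x
    simp [mulVec, replicateRow_apply]
  have hmean (g : S → ℝ) : π ⬝ᵥ ((1 - P + replicateRow S π) *ᵥ g) = π ⬝ᵥ g := by
    rw [hmul, dotProduct_add, dotProduct_sub, dotProduct_mulVec, hπP, dotProduct_smul, hπ,
      sub_self, zero_add, smul_eq_mul, mul_one]
  have hinj : Function.Injective (1 - P + replicateRow S π).mulVec := by
    refine (injective_iff_map_eq_zero (1 - P + replicateRow S π).mulVecLin).2 fun g hg ↦ ?_
    rw [mulVecLin_apply] at hg
    have hg0 : π ⬝ᵥ g = 0 := by rw [← hmean, hg, dotProduct_zero]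
    have hharm : P *ᵥ g = g := by
      rw [hmul, hg0, zero_smul, add_zero, sub_eq_zero] at hg
      exact hg.symm
    funext x
    have hconst : g = g x • 1 := funext fun y ↦ by
      simpa using harmonic_apply_eq hP hirr hharm y x
    rw [hconst, dotProduct_smul, hπ, smul_eq_mul, mul_one] at hg0
    simpa using hg0
  obtain ⟨g, hg⟩ := mulVec_surjective_iff_isUnit.2 (mulVec_injective_iff_isUnit.1 hinj) f
  have hg0 : π ⬝ᵥ g = 0 := by rw [← hmean, hg, hf]
  exact ⟨g, by rw [← hg, hmul, hg0, zero_smul, add_zero]⟩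

lemma mulVec_sq_le (hP : P ∈ rowStochastic ℝ S) (g : S → ℝ) : (P *ᵥ g) ^ 2 ≤ P *ᵥ g ^ 2 :=
  fun x ↦ Real.pow_arith_mean_le_arith_mean_pow_of_even univ (P x) g
    (fun _ _ ↦ nonneg_of_mem_rowStochastic hP) (sum_row_of_mem_rowStochastic hP x) even_two

lemma dotProduct_sq_sub_mulVec_sq_nonneg (hP : P ∈ rowStochastic ℝ S) (hπ : 0 ≤ π)
    (hπP : π ᵥ* P = π) (g : S → ℝ) : 0 ≤ π ⬝ᵥ (g ^ 2 - (P *ᵥ g) ^ 2) := by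
  have hle : π ⬝ᵥ (P *ᵥ g) ^ 2 ≤ π ⬝ᵥ g ^ 2 := calc
    π ⬝ᵥ (P *ᵥ g) ^ 2 ≤ π ⬝ᵥ (P *ᵥ g ^ 2) := dotProduct_le_dotProduct_of_nonneg_left
      (mulVec_sq_le hP g) hπ
    _ = π ⬝ᵥ g ^ 2 := by rw [dotProduct_mulVec, hπP]
  rw [dotProduct_sub]
  exact sub_nonneg.2 hle

/-- `g` and `h` are the first- and second-order correctors of the observable `f`, and `v` is its
asymptotic variance: formally, `1 + iεg - (ε²/2)h` is an eigenvector of the tilted operator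
`exp(iεf)P` with eigenvalue `1 - (ε²/2)v`, to second order in `ε`. -/
structure IsCorrectorPair (P : Matrix S S ℝ) (f g h : S → ℝ) (v : ℝ) : Prop where
  first : g - P *ᵥ g = f
  second : h - P *ᵥ h = g ^ 2 - (P *ᵥ g) ^ 2 - v • 1

lemma exists_isCorrectorPair (hP : P ∈ rowStochastic ℝ S) (hirr : P.IsIrreducible)
    (hπ : π ∈ stdSimplex ℝ S) (hπP : π ᵥ* P = π) (hf : π ⬝ᵥ f = 0) :
    ∃ g h, ∃ v : ℝ≥0, IsCorrectorPair P f g h v := by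
  have hπ1 : π ⬝ᵥ 1 = 1 := by rw [dotProduct_one, hπ.2]
  obtain ⟨g, hg⟩ := exists_sub_mulVec_eq hP hirr hπ1 hπP hf
  let v : ℝ≥0 := ⟨_, dotProduct_sq_sub_mulVec_sq_nonneg hP hπ.1 hπP g⟩
  have hcentred : π ⬝ᵥ (g ^ 2 - (P *ᵥ g) ^ 2 - (v : ℝ) • 1) = 0 := by
    rw [dotProduct_sub, dotProduct_smul, hπ1, smul_eq_mul, mul_one]
    exact sub_self _
  obtain ⟨h, hh⟩ := exists_sub_mulVec_eq hP hirr hπ1 hπP hcentred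
  exact ⟨g, h, v, hg, hh⟩

end StochasticMatrix

/-! ### Markov chains on a finite state space -/

section MarkovChain

variable {Ω S : Type*} [MeasurableSpace Ω] [MeasurableSpace S] {μ : Measure Ω}

lemma integral_comp_eq_sum_measureReal_smul [Fintype S] [MeasurableSingletonClass S]
    [IsFiniteMeasure μ] {E : Type*} [NormedAddCommGroup E] [NormedSpace ℝ E] [CompleteSpace E]
    {T : Ω → S} (hT : Measurable T) (F : S → E) :
    ∫ ω, F (T ω) ∂μ = ∑ s, μ.real {ω | T ω = s} • F s := by
  rw [← integral_map hT.aemeasurable StronglyMeasurable.of_discrete.aestronglyMeasurable,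
    integral_fintype .of_finite]
  exact sum_congr rfl fun s _ ↦ by
    rw [map_measureReal_apply hT (measurableSet_singleton s)]
    rfl

lemma measureReal_fiber_mem_stdSimplex [Fintype S] [MeasurableSingletonClass S]
    [IsProbabilityMeasure μ] {T : Ω → S} (hT : Measurable T) :
    (fun s ↦ μ.real {ω | T ω = s}) ∈ stdSimplex ℝ S :=
  ⟨fun _ ↦ measureReal_nonneg, by
    simpa using (integral_comp_eq_sum_measureReal_smul (μ := μ) hT fun _ ↦ (1 : ℝ)).symm⟩

variable {W : ℕ → Ω → S}

lemma measurable_path (hW : ∀ t, Measurable (W t)) (n : ℕ) :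
    Measurable fun ω (i : Fin n) ↦ W i ω :=
  measurable_pi_lambda _ fun i ↦ hW i

lemma measurable_sum_range_comp (hW : ∀ t, Measurable (W t)) {f : S → ℝ} (hf : Measurable f)
    (n : ℕ) : Measurable fun ω ↦ ∑ t ∈ range n, f (W t ω) :=
  Finset.measurable_sum _ fun t _ ↦ hf.comp (hW t)

lemma integrable_prod_range_mul [Finite S] [MeasurableSingletonClass S] [IsFiniteMeasure μ]
    (hW : ∀ t, Measurable (W t)) (n : ℕ) (q u : S → ℂ) :
    Integrable (fun ω ↦ (∏ t ∈ range n, q (W t ω)) * u (W n ω)) μ := by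
  have hcomp : (fun ω ↦ (∏ t ∈ range n, q (W t ω)) * u (W n ω)) =
      (fun w : Fin (n + 1) → S ↦ (∏ t : Fin n, q (w t.castSucc)) * u (w (Fin.last n))) ∘
        fun ω i ↦ W i ω := by
    ext ω
    simp [prod_range]
  rw [hcomp]
  exact Integrable.of_finite.comp_measurable (measurable_path hW (n + 1))

/-- `W` is a Markov chain under `μ` with transition matrix `P` and arbitrary initial law, in
elementary form: conditionally on any trajectory up to time `n`, the state at time `n + 1` is
distributed according to the row of `P` at the last state of the trajectory. -/
structure IsMarkovChain (μ : Measure Ω) (W : ℕ → Ω → S) (P : Matrix S S ℝ) : Prop where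
  measurable (t : ℕ) : Measurable (W t)
  measureReal_eq (n : ℕ) (w : Fin (n + 1) → S) (y : S) :
    μ.real {ω | (fun i : Fin (n + 1) ↦ W i ω) = w ∧ W (n + 1) ω = y} =
      μ.real {ω | (fun i : Fin (n + 1) ↦ W i ω) = w} * P (w (Fin.last n)) y

namespace IsMarkovChain

variable {P : Matrix S S ℝ} [Fintype S] [MeasurableSingletonClass S]

lemma integral_mul_comp_succ [IsFiniteMeasure μ] (hW : IsMarkovChain μ W P) {A : Type*}
    [NormedRing A] [NormedAlgebra ℝ A] [CompleteSpace A] (n : ℕ) (Φ : (Fin (n + 1) → S) → A)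
    (u : S → A) :
    ∫ ω, Φ (fun i ↦ W i ω) * u (W (n + 1) ω) ∂μ =
      ∫ ω, Φ (fun i ↦ W i ω) * ∑ y, P (W n ω) y • u y ∂μ := calc
  _ = ∑ w, ∑ y, (μ.real {ω | (fun i : Fin (n + 1) ↦ W i ω) = w} * P (w (Fin.last n)) y) •
        (Φ w * u y) := by
    have hpair := (measurable_path hW.measurable (n + 1)).prodMk (hW.measurable (n + 1))
    rw [integral_comp_eq_sum_measureReal_smul hpair fun p ↦ Φ p.1 * u p.2,
      Fintype.sum_prod_type]
    simp only [Prod.mk.injEq, hW.measureReal_eq]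
  _ = ∑ w, μ.real {ω | (fun i : Fin (n + 1) ↦ W i ω) = w} •
        (Φ w * ∑ y, P (w (Fin.last n)) y • u y) := by
    simp only [mul_sum, smul_sum, mul_smul, mul_smul_comm]
  _ = _ := (integral_comp_eq_sum_measureReal_smul (measurable_path hW.measurable (n + 1))
    fun w ↦ Φ w * ∑ y, P (w (Fin.last n)) y • u y).symm

open Matrix in
lemma law_vecMul [IsFiniteMeasure μ] (hW : IsMarkovChain μ W P) (n : ℕ) :
    (fun x ↦ μ.real {ω | W n ω = x}) ᵥ* P = fun y ↦ μ.real {ω | W (n + 1) ω = y} := by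
  ext y
  have hint := hW.integral_mul_comp_succ n (fun _ ↦ (1 : ℝ)) fun z ↦ if z = y then 1 else 0
  simp only [one_mul, smul_eq_mul, mul_ite, mul_one, mul_zero, sum_ite_eq', mem_univ,
    if_true] at hint
  rw [integral_comp_eq_sum_measureReal_smul (hW.measurable (n + 1))
      fun z ↦ if z = y then (1 : ℝ) else 0,
    integral_comp_eq_sum_measureReal_smul (hW.measurable n) fun z ↦ P z y] at hint
  simpa [vecMul, dotProduct] using hint.symm

variable [IsProbabilityMeasure μ] {q u : S → ℂ} {c : ℂ} {δ η : ℝ}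

/- If `u` is an approximate eigenvector of the tilted operator `u ↦ q • P u` with eigenvalue `c`,
each time step multiplies the left-hand integral by `c` up to an error `δ`. -/
lemma norm_integral_prod_mul_sub_le (hW : IsMarkovChain μ W P) (hq : ∀ x, ‖q x‖ ≤ 1)
    (hc : ‖c‖ ≤ 1) (hu : ∀ x, ‖q x * ∑ y, P x y • u y - c * u x‖ ≤ δ) (n : ℕ) :
    ‖∫ ω, (∏ t ∈ range n, q (W t ω)) * u (W n ω) ∂μ - c ^ n * ∫ ω, u (W 0 ω) ∂μ‖ ≤
      n * δ := by
  induction n with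
  | zero => simp
  | succ n ih =>
    set J := ∫ ω, (∏ t ∈ range n, q (W t ω)) * u (W n ω) ∂μ
    set J' := ∫ ω, (∏ t ∈ range (n + 1), q (W t ω)) * u (W (n + 1) ω) ∂μ
    have hstep : J' = ∫ ω, (∏ t ∈ range n, q (W t ω)) *
        (q (W n ω) * ∑ y, P (W n ω) y • u y) ∂μ := by
      simp only [← mul_assoc, ← prod_range_succ]
      simpa only [J', prod_range] using hW.integral_mul_comp_succ n (fun w ↦ ∏ i, q (w i)) u
    have hdiff : ‖J' - c * J‖ ≤ δ := by
      rw [hstep, ← integral_const_mul, ← integral_sub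
        (integrable_prod_range_mul hW.measurable n q fun x ↦ q x * ∑ y, P x y • u y)
        ((integrable_prod_range_mul hW.measurable n q u).const_mul c)]
      refine (norm_integral_le_of_norm_le_const (C := δ) (ae_of_all _ fun ω ↦ ?_)).trans_eq
        (by simp)
      rw [mul_left_comm c, ← mul_sub, norm_mul, norm_prod]
      exact (mul_le_of_le_one_left (norm_nonneg _) (prod_le_one (fun _ _ ↦ norm_nonneg _)
        fun _ _ ↦ hq _)).trans (hu _)
    calc ‖J' - c ^ (n + 1) * ∫ ω, u (W 0 ω) ∂μ‖
        = ‖(J' - c * J) + c * (J - c ^ n * ∫ ω, u (W 0 ω) ∂μ)‖ := by ring_nf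
      _ ≤ δ + 1 * (n * δ) := (norm_add_le _ _).trans (add_le_add hdiff (by
        rw [norm_mul]
        exact mul_le_mul hc ih (norm_nonneg _) zero_le_one))
      _ = (n + 1 : ℕ) * δ := by push_cast; ring

lemma norm_integral_prod_sub_pow_le (hW : IsMarkovChain μ W P) (hq : ∀ x, ‖q x‖ ≤ 1)
    (hc : ‖c‖ ≤ 1) (hu : ∀ x, ‖q x * ∑ y, P x y • u y - c * u x‖ ≤ δ)
    (hu1 : ∀ x, ‖u x - 1‖ ≤ η) (n : ℕ) :
    ‖∫ ω, ∏ t ∈ range n, q (W t ω) ∂μ - c ^ n‖ ≤ n * δ + 2 * η := by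
  set I := ∫ ω, ∏ t ∈ range n, q (W t ω) ∂μ
  set J := ∫ ω, (∏ t ∈ range n, q (W t ω)) * u (W n ω) ∂μ
  have hJI : ‖J - I‖ ≤ η := by
    have hI := integrable_prod_range_mul (μ := μ) hW.measurable n q 1
    simp only [Pi.one_apply, mul_one] at hI
    rw [← integral_sub (integrable_prod_range_mul hW.measurable n q u) hI]
    refine (norm_integral_le_of_norm_le_const (C := η) (ae_of_all _ fun ω ↦ ?_)).trans_eq
      (by simp)
    rw [← mul_sub_one, norm_mul, norm_prod]
    exact (mul_le_of_le_one_left (norm_nonneg _) (prod_le_one (fun _ _ ↦ norm_nonneg _)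
      fun _ _ ↦ hq _)).trans (hu1 _)
  have hinit : ‖∫ ω, u (W 0 ω) ∂μ - 1‖ ≤ η := by
    have hint : Integrable (fun ω ↦ u (W 0 ω)) μ := by
      simpa using integrable_prod_range_mul hW.measurable 0 q u
    have hone : ∫ ω, u (W 0 ω) ∂μ - 1 = ∫ ω, (u (W 0 ω) - 1) ∂μ := by
      simp [integral_sub hint (integrable_const _)]
    rw [hone]
    exact (norm_integral_le_of_norm_le_const (ae_of_all _ fun ω ↦ hu1 _)).trans_eq (by simp)
  have hpow : ‖c ^ n * (∫ ω, u (W 0 ω) ∂μ - 1)‖ ≤ η := by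
    rw [norm_mul, norm_pow]
    exact (mul_le_of_le_one_left (norm_nonneg _) (pow_le_one₀ (norm_nonneg _) hc)).trans hinit
  calc ‖I - c ^ n‖
      = ‖(J - c ^ n * ∫ ω, u (W 0 ω) ∂μ) + c ^ n * (∫ ω, u (W 0 ω) ∂μ - 1) - (J - I)‖ := by
        ring_nf
    _ ≤ n * δ + η + η := norm_sub_le_of_le (norm_add_le_of_le
        (hW.norm_integral_prod_mul_sub_le hq hc hu n) hpow) hJI
    _ = n * δ + 2 * η := by ring

end IsMarkovChain

end MarkovChain

/-! ### The perturbed eigenvector -/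

section Perturbation

open Complex Asymptotics Matrix

lemma cexp_I_mul_sub_isBigO (a : ℝ) :
    (fun ε : ℝ ↦ cexp (I * (ε * a)) - (1 + I * (ε * a) - ε ^ 2 * a ^ 2 / 2)) =O[𝓝 0]
      fun ε ↦ ε ^ 3 := by
  have hlim : Tendsto (fun ε : ℝ ↦ I * (ε * a)) (𝓝 0) (𝓝 0) :=
    Continuous.tendsto' (by fun_prop) _ _ (by simp)
  have htaylor := (exp_sub_sum_range_isBigO_pow 3).comp_tendsto hlim
  refine (htaylor.congr_left fun ε ↦ ?_).trans (.of_bound (|a| ^ 3) (.of_forall fun ε ↦ ?_))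
  · simp only [Function.comp_apply, sum_range_succ, range_zero, sum_empty, pow_zero, pow_one,
      Nat.factorial, mul_pow, I_sq]
    push_cast
    ring
  · simp [mul_pow, mul_comm]

/- `hfirst` and `hsecond` equate the coefficients of `ε` and of `ε²`. -/
lemma cexp_mul_quadratic_sub_isBigO {a b c g h v : ℝ} (hfirst : a + b = g)
    (hsecond : a ^ 2 + 2 * a * b + c = h + v) :
    (fun ε : ℝ ↦ cexp (I * (ε * a)) * (1 + I * (ε * b) - ε ^ 2 * c / 2) -
      (1 - ε ^ 2 * v / 2) * (1 + I * (ε * g) - ε ^ 2 * h / 2)) =O[𝓝 0] fun ε ↦ ε ^ 3 := by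
  obtain rfl : c = h + v - a ^ 2 - 2 * a * b := by linarith
  subst hfirst
  set c := h + v - a ^ 2 - 2 * a * b
  have hremainder : (fun ε : ℝ ↦ (cexp (I * (ε * a)) - (1 + I * (ε * a) - ε ^ 2 * a ^ 2 / 2)) *
      (1 + I * (ε * b) - ε ^ 2 * c / 2)) =O[𝓝 0] fun ε ↦ ε ^ 3 * (1 : ℝ) :=
    (cexp_I_mul_sub_isBigO a).mul
      ((Continuous.tendsto (by fun_prop) 0).isBigO_one ℝ)
  have hcubic : (fun ε : ℝ ↦ (ε ^ 3 : ℂ) *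
      (I * (v * (a + b) - a * c - a ^ 2 * b) / 2 + ε * (a ^ 2 * c - v * h) / 4))
      =O[𝓝 0] fun ε ↦ ε ^ 3 * (1 : ℝ) :=
    (IsBigO.of_bound 1 (.of_forall fun ε ↦ by simp)).mul
      ((Continuous.tendsto (by fun_prop) 0).isBigO_one ℝ)
  simp only [mul_one] at hremainder hcubic
  refine (hremainder.add hcubic).congr_left fun ε ↦ ?_
  simp only [c]
  push_cast
  linear_combination (-(ε : ℂ) ^ 2 * a * b) * I_sq

variable {S : Type*}

/-- The vector `1 + iεg - (ε²/2)h`, an approximate eigenvector of `exp(iεf)P` when `(g, h)` is a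
corrector pair of `f`. -/
noncomputable def perturbedEigenvector (g h : S → ℝ) (ε : ℝ) (x : S) : ℂ :=
  1 + I * (ε * g x) - ε ^ 2 * h x / 2

lemma tendsto_perturbedEigenvector (g h : S → ℝ) :
    Tendsto (perturbedEigenvector g h) (𝓝 0) (𝓝 1) := by
  refine tendsto_pi_nhds.2 fun x ↦ Continuous.tendsto' ?_ _ _ (by simp [perturbedEigenvector])
  unfold perturbedEigenvector
  fun_prop

variable [Fintype S]

lemma sum_smul_perturbedEigenvector {P : Matrix S S ℝ} {x : S} (hP : ∑ y, P x y = 1)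
    (g h : S → ℝ) (ε : ℝ) :
    ∑ y, P x y • perturbedEigenvector g h ε y =
      perturbedEigenvector (P *ᵥ g) (P *ᵥ h) ε x := by
  have hP' : ∑ y, (P x y : ℂ) = 1 := by exact_mod_cast hP
  simp only [perturbedEigenvector, real_smul, mulVec, dotProduct, ofReal_sum, ofReal_mul, mul_sum,
    sum_div, mul_add, mul_sub, sum_add_distrib, sum_sub_distrib, mul_one, hP']
  exact congrArg₂ _ (congrArg _ (sum_congr rfl fun y _ ↦ by ring)) (sum_congr rfl fun y _ ↦ by ring)

/-- The defect of `perturbedEigenvector g h ε` as an eigenvector of `exp(iεf)P` with eigenvalue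
`1 - (ε²/2)v`. -/
noncomputable def eigenvectorDefect (P : Matrix S S ℝ) (f g h : S → ℝ) (v ε : ℝ) (x : S) : ℂ :=
  cexp (I * (ε * f x)) * ∑ y, P x y • perturbedEigenvector g h ε y -
    (1 - ε ^ 2 * v / 2) * perturbedEigenvector g h ε x

lemma IsCorrectorPair.eigenvectorDefect_isBigO [DecidableEq S] {P : Matrix S S ℝ}
    {f g h : S → ℝ} {v : ℝ} (hgh : IsCorrectorPair P f g h v) (hP : P ∈ rowStochastic ℝ S) :
    eigenvectorDefect P f g h v =O[𝓝 0] fun ε ↦ ε ^ 3 := by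
  refine isBigO_pi.2 fun x ↦ ?_
  have hfirst : g x - (P *ᵥ g) x = f x := congrFun hgh.first x
  have hsecond : h x - (P *ᵥ h) x = g x ^ 2 - (P *ᵥ g) x ^ 2 - v := by
    simpa using congrFun hgh.second x
  simp only [eigenvectorDefect,
    sum_smul_perturbedEigenvector (sum_row_of_mem_rowStochastic hP x)]
  exact cexp_mul_quadratic_sub_isBigO (by linarith) (by rw [← hfirst]; linear_combination -hsecond)

end Perturbation

/-! ### The central limit theorem for finite irreducible Markov chains -/

section CentralLimitTheorem

open Matrix Complex Asymptotics ProbabilityTheory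

variable {Ω S : Type*} [MeasurableSpace Ω] [Fintype S] [DecidableEq S] [MeasurableSpace S]
  [MeasurableSingletonClass S] {μ : Measure Ω} [IsProbabilityMeasure μ] {W : ℕ → Ω → S}
  {P : Matrix S S ℝ} {f g h : S → ℝ}

lemma tendsto_div_sqrt_natCast (t : ℝ) : Tendsto (fun n : ℕ ↦ t / √n) atTop (𝓝 0) :=
  (Real.tendsto_sqrt_atTop.comp tendsto_natCast_atTop_atTop).const_div_atTop t

lemma tendsto_natCast_mul_norm_comp_div_sqrt {E : Type*} [SeminormedAddCommGroup E] {D : ℝ → E}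
    (hD : D =O[𝓝 0] fun ε ↦ ε ^ 3) (t : ℝ) :
    Tendsto (fun n : ℕ ↦ n * ‖D (t / √n)‖) atTop (𝓝 0) := by
  have hbound : (fun n : ℕ ↦ n * ‖D (t / √n)‖) =O[atTop] fun n : ℕ ↦ n * (t / √n) ^ 3 :=
    (isBigO_refl _ _).mul (hD.comp_tendsto (tendsto_div_sqrt_natCast t)).norm_left
  refine hbound.trans_tendsto ((tendsto_div_sqrt_natCast (t ^ 3)).congr fun n ↦ ?_)
  rcases n.eq_zero_or_pos with rfl | hn
  · simp
  · field_simp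
    rw [Real.sq_sqrt n.cast_nonneg]

lemma tendsto_one_sub_sq_div_sqrt_pow (t v : ℝ) :
    Tendsto (fun n : ℕ ↦ (1 - ((t / √n : ℝ) : ℂ) ^ 2 * v / 2) ^ n) atTop
      (𝓝 (cexp (-(v * t ^ 2 / 2)))) := by
  refine (tendsto_one_add_div_pow_exp _).congr fun n ↦ ?_
  have hsq : (t / √n) ^ 2 = t ^ 2 / n := by rw [div_pow, Real.sq_sqrt n.cast_nonneg]
  have hsqC : ((t / √n : ℝ) : ℂ) ^ 2 = (t : ℂ) ^ 2 / n := by exact_mod_cast congrArg ofReal hsq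
  rw [hsqC]
  ring

lemma eventually_norm_one_sub_sq_mul_le_one (v : ℝ≥0) :
    ∀ᶠ ε : ℝ in 𝓝 0, ‖(1 - (ε : ℂ) ^ 2 * (v : ℝ) / 2)‖ ≤ 1 := by
  have hlim : Tendsto (fun ε : ℝ ↦ ε ^ 2 * v / 2) (𝓝 0) (𝓝 0) :=
    Continuous.tendsto' (by fun_prop) _ _ (by simp)
  filter_upwards [hlim.eventually_le_const zero_lt_one] with ε hε
  have hε' : 0 ≤ ε ^ 2 * v / 2 := by positivity
  rw [show (1 - (ε : ℂ) ^ 2 * (v : ℝ) / 2) = ((1 - ε ^ 2 * v / 2 : ℝ) : ℂ) by push_cast; rfl,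
    norm_real, Real.norm_eq_abs, abs_le]
  constructor <;> linarith

lemma IsMarkovChain.tendsto_integral_prod_cexp (hW : IsMarkovChain μ W P)
    (hP : P ∈ rowStochastic ℝ S) {v : ℝ≥0} (hgh : IsCorrectorPair P f g h v) (t : ℝ) :
    Tendsto (fun n : ℕ ↦ ∫ ω, ∏ s ∈ range n, cexp (I * ((t / √n : ℝ) * f (W s ω))) ∂μ) atTop
      (𝓝 (cexp (-(v * t ^ 2 / 2)))) := by
  set u := perturbedEigenvector g h
  have hε := tendsto_div_sqrt_natCast t
  have herror : Tendsto (fun n : ℕ ↦ n * ‖eigenvectorDefect P f g h v (t / √n)‖ +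
      2 * ‖u (t / √n) - 1‖) atTop (𝓝 0) := by
    have hu := (tendsto_iff_norm_sub_tendsto_zero.1 (tendsto_perturbedEigenvector g h)).comp hε
    simpa using (tendsto_natCast_mul_norm_comp_div_sqrt (hgh.eigenvectorDefect_isBigO hP) t).add
      (hu.const_mul 2)
  refine (tendsto_one_sub_sq_div_sqrt_pow t v).congr_dist (squeeze_zero' (.of_forall fun n ↦
    dist_nonneg) ?_ herror)
  filter_upwards [hε.eventually (eventually_norm_one_sub_sq_mul_le_one v)] with n hn
  rw [dist_comm, dist_eq_norm]
  refine hW.norm_integral_prod_sub_pow_le (fun x ↦ ?_) hn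
    (fun x ↦ norm_le_pi_norm (eigenvectorDefect P f g h v (t / √n)) x)
    (fun x ↦ norm_le_pi_norm (u (t / √n) - 1) x) n
  rw [← ofReal_mul, norm_exp_I_mul_ofReal]

lemma IsMarkovChain.tendstoInDistribution_of_isCorrectorPair (hW : IsMarkovChain μ W P)
    (hP : P ∈ rowStochastic ℝ S) {v : ℝ≥0} (hgh : IsCorrectorPair P f g h v) :
    TendstoInDistribution (fun (n : ℕ) ω ↦ (√n)⁻¹ * ∑ t ∈ range n, f (W t ω)) atTop id
      (fun _ ↦ μ) (gaussianReal 0 v) where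
  forall_aemeasurable n :=
    ((measurable_sum_range_comp hW.measurable .of_discrete n).const_mul _).aemeasurable
  tendsto := by
    have hsum (n : ℕ) : Measurable fun ω ↦ ∑ t ∈ range n, f (W t ω) :=
      measurable_sum_range_comp hW.measurable .of_discrete n
    refine ProbabilityMeasure.tendsto_iff_tendsto_charFun.2 fun t ↦ ?_
    have hgauss : charFun (Measure.map id (gaussianReal 0 v)) t = cexp (-(v * t ^ 2 / 2)) := by
      simp [charFun_gaussianReal]
    rw [ProbabilityMeasure.coe_mk, hgauss]
    refine (hW.tendsto_integral_prod_cexp hP hgh t).congr fun n ↦ ?_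
    rw [ProbabilityMeasure.coe_mk, charFun_apply_real,
      integral_map ((hsum n).const_mul _).aemeasurable (by fun_prop)]
    refine integral_congr_ae (ae_of_all _ fun ω ↦ ?_)
    simp only [← Complex.exp_sum]
    congr 1
    push_cast
    simp only [mul_sum, sum_mul]
    exact sum_congr rfl fun s _ ↦ by ring

theorem IsMarkovChain.central_limit (hW : IsMarkovChain μ W P) (hP : P ∈ rowStochastic ℝ S)
    (hirr : P.IsIrreducible) {π : S → ℝ} (hπ : π ∈ stdSimplex ℝ S) (hπP : π ᵥ* P = π)
    (hf : π ⬝ᵥ f = 0) :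
    ∃ v : ℝ≥0, TendstoInDistribution (fun (n : ℕ) ω ↦ (√n)⁻¹ * ∑ t ∈ range n, f (W t ω)) atTop
      id (fun _ ↦ μ) (gaussianReal 0 v) := by
  obtain ⟨g, h, v, hgh⟩ := exists_isCorrectorPair hP hirr hπ hπP hf
  exact ⟨v, hW.tendstoInDistribution_of_isCorrectorPair hP hgh⟩

end CentralLimitTheorem

/-! ### The delta method -/

section DeltaMethod

open ProbabilityTheory

variable {Ω ι E F : Type*} [MeasurableSpace Ω] {μ : Measure Ω} {l : Filter ι}
  [NormedAddCommGroup E]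

/-- The family `B` is bounded in probability, `B i = O_P(1)`: its laws give uniformly small mass to
the complement of a large ball. -/
def IsBoundedInProbability (μ : Measure Ω) (B : ι → Ω → E) : Prop :=
  ∀ ε > 0, ∃ K : ℝ, ∀ i, μ {ω | K < ‖B i ω‖} ≤ ε

lemma isBoundedInProbability_of_tendstoInDistribution [CompleteSpace E] [SecondCountableTopology E]
    [MeasurableSpace E] [BorelSpace E] [IsProbabilityMeasure μ] {Ω' : Type*} [MeasurableSpace Ω']
    {ν : Measure Ω'} [IsProbabilityMeasure ν] {B : ℕ → Ω → E} {G : Ω' → E}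
    (hB : TendstoInDistribution B atTop G (fun _ ↦ μ) ν) : IsBoundedInProbability μ B := by
  have htight := isTightMeasureSet_of_isCompact_closure
    (hB.tendsto.isCompact_insert_range.closure_of_subset (Set.subset_insert _ _))
  intro ε hε
  obtain ⟨K, hK⟩ := (ENNReal.tendsto_atTop_zero.1
    (tendsto_measure_norm_gt_of_isTightMeasureSet htight) ε hε)
  refine ⟨K, fun n ↦ ?_⟩
  have hn := (iSup₂_le_iff.1 (hK K le_rfl)) _ ⟨_, Set.mem_range_self n, rfl⟩
  rwa [ProbabilityMeasure.coe_mk, Measure.map_apply_of_aemeasurable (hB.forall_aemeasurable n)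
    (measurableSet_lt measurable_const measurable_norm)] at hn

lemma isBoundedInProbability_pi {J : Type*} [Fintype J] {B : ι → Ω → J → ℝ}
    (hB : ∀ j, IsBoundedInProbability μ fun i ω ↦ B i ω j) : IsBoundedInProbability μ B := by
  intro ε hε
  choose K hK using fun j ↦ hB j (ε / Fintype.card J)
    (ENNReal.div_pos hε.ne' (ENNReal.natCast_ne_top _))
  refine ⟨∑ j, |K j|, fun i ↦ ?_⟩
  have hsub : {ω | ∑ j, |K j| < ‖B i ω‖} ⊆ ⋃ j, {ω | K j < ‖B i ω j‖} := by
    intro ω hω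
    by_contra! hle
    simp only [Set.mem_iUnion, Set.mem_ofPred_eq, not_exists, not_lt] at hle hω
    refine hω.not_ge ((pi_norm_le_iff_of_nonneg (sum_nonneg fun j _ ↦ abs_nonneg _)).2 fun j ↦ ?_)
    exact ((hle j).trans (le_abs_self _)).trans
      (single_le_sum (f := fun j ↦ |K j|) (fun j _ ↦ abs_nonneg _) (mem_univ j))
  calc μ {ω | ∑ j, |K j| < ‖B i ω‖} ≤ ∑ j, μ {ω | K j < ‖B i ω j‖} :=
        (measure_mono hsub).trans (measure_iUnion_fintype_le _ _)
    _ ≤ ∑ _j : J, ε / Fintype.card J := sum_le_sum fun j _ ↦ hK j i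
    _ ≤ ε := by
      rw [sum_const, card_univ, nsmul_eq_mul]
      exact ENNReal.mul_div_le

variable [NormedSpace ℝ E] [NormedAddCommGroup F] [NormedSpace ℝ F] {φ : E → F} {φ' : E →L[ℝ] F}
  {θ : E} {r : ι → ℝ}

lemma eventually_norm_smul_sub_sub_lt (hφ : HasFDerivAt φ φ' θ) (hr : Tendsto r l atTop) (K : ℝ)
    {ε : ℝ} (hε : 0 < ε) :
    ∀ᶠ i in l, ∀ x, ‖r i • (x - θ)‖ ≤ K →
      ‖r i • (φ x - φ θ) - φ' (r i • (x - θ))‖ < ε := by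
  obtain ⟨c, hc, hcK⟩ : ∃ c > 0, c * K < ε := ⟨ε / (|K| + 1), by positivity, by
    rw [div_mul_eq_mul_div, div_lt_iff₀ (by positivity)]
    exact mul_lt_mul_of_pos_left ((le_abs_self K).trans_lt (lt_add_one _)) hε⟩
  obtain ⟨δ, hδ, hlin⟩ := Metric.eventually_nhds_iff.1
    ((hasFDerivAt_iff_isLittleO.1 hφ).bound hc)
  filter_upwards [hr.eventually_gt_atTop 0, hr.eventually_gt_atTop (K / δ)] with i hi hKi x hx
  have hx' : r i * ‖x - θ‖ ≤ K := by rwa [norm_smul, Real.norm_of_nonneg hi.le] at hx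
  have hdist : dist x θ < δ := by
    rw [dist_eq_norm]
    refine lt_of_mul_lt_mul_left (hx'.trans_lt ?_) hi.le
    rwa [div_lt_iff₀ hδ] at hKi
  calc ‖r i • (φ x - φ θ) - φ' (r i • (x - θ))‖ = r i * ‖φ x - φ θ - φ' (x - θ)‖ := by
        rw [map_smul, ← smul_sub, norm_smul, Real.norm_of_nonneg hi.le]
    _ ≤ r i * (c * ‖x - θ‖) := by gcongr; exact hlin hdist
    _ = c * (r i * ‖x - θ‖) := by ring
    _ ≤ c * K := by gcongr
    _ < ε := hcK

lemma tendstoInMeasure_smul_sub_sub (hφ : HasFDerivAt φ φ' θ) (hr : Tendsto r l atTop)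
    {T : ι → Ω → E} (hT : IsBoundedInProbability μ fun i ω ↦ r i • (T i ω - θ)) :
    TendstoInMeasure μ
      ((fun i ω ↦ r i • (φ (T i ω) - φ θ)) - fun i ω ↦ φ' (r i • (T i ω - θ))) l 0 := by
  refine tendstoInMeasure_iff_norm.2 fun ε hε ↦ ENNReal.tendsto_nhds_zero.2 fun η hη ↦ ?_
  obtain ⟨K, hK⟩ := hT η hη
  filter_upwards [eventually_norm_smul_sub_sub_lt hφ hr K hε] with i hi
  refine (measure_mono fun ω hω ↦ ?_).trans (hK i)
  by_contra hle
  have hsmall := hi (T i ω) (not_lt.1 hle)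
  simp only [Pi.sub_apply, Pi.zero_apply, sub_zero, Set.mem_ofPred_eq] at hω
  exact hsmall.not_ge hω

end DeltaMethod

/-! ### Empirical frequencies of a Markov chain -/

section EmpiricalFrequency

open Matrix ProbabilityTheory

variable {S Ω : Type*} [DecidableEq S]

/-- The vector of empirical frequencies of the states among the first `m` terms of `w`; it is zero
for `m = 0`. -/
noncomputable def empiricalFreq (w : ℕ → S) (m : ℕ) : S → ℝ :=
  fun x ↦ (m : ℝ)⁻¹ * ∑ t ∈ range m, if w t = x then 1 else 0

lemma sqrt_smul_empiricalFreq_sub (w : ℕ → S) (m : ℕ) (π : S → ℝ) :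
    √m • (empiricalFreq w m - π) =
      (√m)⁻¹ • ∑ t ∈ range m, fun x ↦ (if w t = x then 1 else 0) - π x := by
  ext x
  simp only [empiricalFreq, Pi.smul_apply, Pi.sub_apply, smul_eq_mul, Finset.sum_apply,
    sum_sub_distrib, sum_const, card_range, nsmul_eq_mul]
  rcases m.eq_zero_or_pos with rfl | hm
  · simp
  · have hsqrt : √(m : ℝ) ≠ 0 := by positivity
    have hm' : (m : ℝ) = √m * √m := (Real.mul_self_sqrt m.cast_nonneg).symm
    rw [hm']
    simp only [Real.sqrt_mul_self (Real.sqrt_nonneg _)]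
    field_simp

variable {π : S → ℝ}

lemma dotProduct_apply_indicator_sub [Fintype S] (hπ : π ∈ stdSimplex ℝ S) (L : (S → ℝ) →ₗ[ℝ] ℝ) :
    π ⬝ᵥ (fun s ↦ L fun x ↦ (if s = x then 1 else 0) - π x) = 0 := by
  have hmean : ∑ s, π s • (fun x ↦ (if s = x then 1 else 0) - π x) = 0 := by
    ext x
    simp [mul_sub, sum_sub_distrib, ← sum_mul, hπ.2]
  simpa only [dotProduct, map_sum, map_smul, smul_eq_mul, map_zero] using congrArg L hmean

variable [MeasurableSpace S] [MeasurableSingletonClass S] [MeasurableSpace Ω] {μ : Measure Ω}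
  {W : ℕ → Ω → S} {P : Matrix S S ℝ}

lemma measurable_comp_empiricalFreq [Finite S] (hW : ∀ t, Measurable (W t)) {E : Type*}
    [MeasurableSpace E] (φ : (S → ℝ) → E) (m : ℕ) :
    Measurable fun ω ↦ φ (empiricalFreq (fun t ↦ W t ω) m) := by
  have hpath : (fun ω ↦ φ (empiricalFreq (fun t ↦ W t ω) m)) =
      (fun w : Fin m → S ↦ φ fun x ↦ (m : ℝ)⁻¹ * ∑ t, if w t = x then 1 else 0) ∘
        fun ω i ↦ W i ω := by
    ext1 ω
    unfold empiricalFreq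
    simp only [Function.comp_apply, sum_range]
  rw [hpath]
  exact Measurable.of_discrete.comp (measurable_path hW m)

variable [Fintype S] [IsProbabilityMeasure μ]

lemma IsMarkovChain.exists_tendstoInDistribution_apply_empiricalFreq (hW : IsMarkovChain μ W P)
    (hP : P ∈ rowStochastic ℝ S) (hirr : P.IsIrreducible) (hπ : π ∈ stdSimplex ℝ S)
    (hπP : π ᵥ* P = π) (L : (S → ℝ) →ₗ[ℝ] ℝ) :
    ∃ v : ℝ≥0, TendstoInDistribution
      (fun (m : ℕ) ω ↦ L (√m • (empiricalFreq (fun t ↦ W t ω) m - π))) atTop id (fun _ ↦ μ)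
      (gaussianReal 0 v) := by
  obtain ⟨v, hv⟩ := hW.central_limit hP hirr hπ hπP (dotProduct_apply_indicator_sub hπ L)
  refine ⟨v, ?_⟩
  simpa only [sqrt_smul_empiricalFreq_sub, map_smul, map_sum, smul_eq_mul] using hv

theorem IsMarkovChain.exists_tendstoInDistribution_comp_empiricalFreq (hW : IsMarkovChain μ W P)
    (hP : P ∈ rowStochastic ℝ S) (hirr : P.IsIrreducible) (hπ : π ∈ stdSimplex ℝ S)
    (hπP : π ᵥ* P = π) {φ : (S → ℝ) → ℝ} (hφ : DifferentiableAt ℝ φ π) :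
    ∃ v : ℝ≥0, TendstoInDistribution
      (fun (m : ℕ) ω ↦ √m * (φ (empiricalFreq (fun t ↦ W t ω) m) - φ π)) atTop id (fun _ ↦ μ)
      (gaussianReal 0 v) := by
  have hclt := hW.exists_tendstoInDistribution_apply_empiricalFreq hP hirr hπ hπP
  have hbdd : IsBoundedInProbability μ
      fun (m : ℕ) ω ↦ √m • (empiricalFreq (fun t ↦ W t ω) m - π) :=
    isBoundedInProbability_pi fun x ↦
      have ⟨_, hx⟩ := hclt (LinearMap.proj x)
      isBoundedInProbability_of_tendstoInDistribution hx
  have hsqrt : Tendsto (fun m : ℕ ↦ √(m : ℝ)) atTop atTop :=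
    Real.tendsto_sqrt_atTop.comp tendsto_natCast_atTop_atTop
  obtain ⟨v, hv⟩ := hclt (fderiv ℝ φ π).toLinearMap
  refine ⟨v, tendstoInDistribution_of_tendstoInMeasure_sub _ _ hv
    (tendstoInMeasure_smul_sub_sub hφ.hasFDerivAt hsqrt hbdd) fun m ↦ ?_⟩
  exact (((measurable_comp_empiricalFreq hW.measurable φ m).sub_const _).const_mul _).aemeasurable

end EmpiricalFrequency

/-! ### Blocks of a process of finite Markov order -/

section Blocks

open Matrix

variable {A Ω : Type*} {k : ℕ}

/-- The block of length `k + 1` of the sequence `u` that starts at time `t`. -/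
def block (k : ℕ) (u : ℕ → A) (t : ℕ) : Fin (k + 1) → A := fun i ↦ u (t + i)

lemma tail_block_eq_init_block_succ (u : ℕ → A) (t : ℕ) :
    Fin.tail (block k u t) = Fin.init (block k u (t + 1)) := by
  ext i
  simp only [Fin.tail, Fin.init, block, Fin.val_succ, Fin.val_castSucc]
  congr 1
  omega

lemma block_succ_eq_iff {u : ℕ → A} {t : ℕ} {y : Fin (k + 1) → A} :
    block k u (t + 1) = y ↔
      Fin.tail (block k u t) = Fin.init y ∧ u (t + 1 + k) = y (Fin.last k) := by
  rw [tail_block_eq_init_block_succ]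
  refine ⟨by rintro rfl; exact ⟨rfl, rfl⟩, fun ⟨hinit, hlast⟩ ↦ ?_⟩
  rw [← Fin.snoc_init_self y, ← Fin.snoc_init_self (block k u (t + 1)), hinit, ← hlast]
  rfl

lemma forall_block_eq_iff {n : ℕ} {u u' : ℕ → A} :
    (∀ t : Fin (n + 1), block k u t = block k u' t) ↔
      (fun i : Fin (n + 1 + k) ↦ u i) = fun i : Fin (n + 1 + k) ↦ u' i := by
  refine ⟨fun h ↦ funext fun i ↦ ?_, fun h t ↦ funext fun i ↦ ?_⟩
  · have hi := congrFun (h ⟨min (i : ℕ) n, by omega⟩) ⟨i - min (i : ℕ) n, by omega⟩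
    simpa [block, Nat.add_sub_cancel' (min_le_left (i : ℕ) n)] using hi
  · exact congrFun h ⟨t + i, by omega⟩

/-- The transition matrix of the `(k + 1)`-blocks of a process of Markov order `k` with transition
probabilities `Q`: a block can only be followed by a block that overlaps it in `k` symbols. -/
def blockMatrix [DecidableEq A] (Q : (Fin k → A) → A → ℝ) :
    Matrix (Fin (k + 1) → A) (Fin (k + 1) → A) ℝ :=
  fun x y ↦ if Fin.tail x = Fin.init y then Q (Fin.tail x) (y (Fin.last k)) else 0

variable {Q : (Fin k → A) → A → ℝ}

lemma blockMatrix_block_block_succ [DecidableEq A] (u : ℕ → A) (t : ℕ) :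
    blockMatrix Q (block k u t) (block k u (t + 1)) =
      Q (Fin.tail (block k u t)) (u (t + 1 + k)) :=
  if_pos (tail_block_eq_init_block_succ u t)

lemma blockMatrix_nonneg [DecidableEq A] (hQ : ∀ h s, 0 ≤ Q h s) (x y : Fin (k + 1) → A) :
    0 ≤ blockMatrix Q x y := by
  unfold blockMatrix
  split_ifs
  exacts [hQ _ _, le_rfl]

lemma blockMatrix_mem_rowStochastic [Fintype A] [DecidableEq A] (hQ : ∀ h s, 0 ≤ Q h s)
    (hQsum : ∀ h, ∑ s, Q h s = 1) : blockMatrix Q ∈ rowStochastic ℝ (Fin (k + 1) → A) := by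
  refine mem_rowStochastic_iff_sum.2 ⟨blockMatrix_nonneg hQ, fun x ↦ ?_⟩
  rw [← (Fin.snocEquiv fun _ ↦ A).sum_comp, Fintype.sum_prod_type_right]
  simp [blockMatrix, Fin.snocEquiv, hQsum]

/- Any block `y` is reached from any block `x` in exactly `k + 1` steps, by reading the
concatenation of `x` and `y` through a sliding window. -/
lemma blockMatrix_isIrreducible [Finite A] [DecidableEq A] (hQ : ∀ h s, 0 < Q h s) :
    (blockMatrix Q).IsIrreducible := by
  cases nonempty_fintype A
  have hnonneg := blockMatrix_nonneg fun h s ↦ (hQ h s).le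
  refine IsPrimitive.isIrreducible ⟨hnonneg, k + 1, k.succ_pos, fun x y ↦ ?_⟩
  let u : ℕ → A := fun t ↦ if t < k + 1 then x (Fin.ofNat (k + 1) t) else y (Fin.ofNat (k + 1) t)
  have hx : block k u 0 = x := funext fun i ↦ by simp [block, u, i.is_le]
  have hy : block k u (k + 1) = y := funext fun i ↦ by
    have hi : Fin.ofNat (k + 1) (k + 1 + i) = i := Fin.ext (by simp [Nat.mod_eq_of_lt i.is_lt])
    simp only [block, u, hi, if_neg (Nat.le_add_right (k + 1) i).not_gt]
  have hpos := pow_apply_pos_of_path hnonneg (z := block k u)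
    (fun t ↦ by rw [blockMatrix_block_block_succ]; exact hQ _ _) (k + 1)
  rwa [hx, hy] at hpos

variable [MeasurableSpace Ω] [MeasurableSpace A] {μ : Measure Ω} {V : ℕ → Ω → A}

/-- `V` is a Markov process of order `k` under `μ` with transition probabilities `Q`, in elementary
form: conditionally on any trajectory of length `j + k`, the next symbol is distributed according
to `Q` at the last `k` symbols of the trajectory. -/
structure IsMarkovOfOrder (μ : Measure Ω) (V : ℕ → Ω → A) (k : ℕ) (Q : (Fin k → A) → A → ℝ) :
    Prop where
  measurable (t : ℕ) : Measurable (V t)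
  measureReal_eq (j : ℕ) (v : Fin (j + k) → A) (s : A) :
    μ.real {ω | (fun i : Fin (j + k) ↦ V i ω) = v ∧ V (j + k) ω = s} =
      μ.real {ω | (fun i : Fin (j + k) ↦ V i ω) = v} * Q (fun i ↦ v (Fin.natAdd j i)) s

lemma IsMarkovOfOrder.measureReal_block_eq [DecidableEq A] (hV : IsMarkovOfOrder μ V k Q) (n : ℕ)
    (u : ℕ → A) (y : Fin (k + 1) → A) :
    μ.real {ω | (∀ t : Fin (n + 1), block k (V · ω) t = block k u t) ∧
        block k (V · ω) (n + 1) = y} =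
      μ.real {ω | ∀ t : Fin (n + 1), block k (V · ω) t = block k u t} *
        blockMatrix Q (block k u n) y := by
  have hnext (ω : Ω) (h : ∀ t : Fin (n + 1), block k (V · ω) t = block k u t) :
      block k (V · ω) (n + 1) = y ↔
        Fin.tail (block k u n) = Fin.init y ∧ V (n + 1 + k) ω = y (Fin.last k) := by
    have hn : block k (V · ω) n = block k u n := h (Fin.last n)
    rw [block_succ_eq_iff, hn]
  have hwindow : (fun i : Fin k ↦ u (Fin.natAdd (n + 1) i)) = Fin.tail (block k u n) := by
    rw [tail_block_eq_init_block_succ]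
    rfl
  simp only [and_congr_right (hnext _)]
  by_cases hy : Fin.tail (block k u n) = Fin.init y
  · simp only [hy, true_and, forall_block_eq_iff, blockMatrix, if_true]
    rw [hV.measureReal_eq (n + 1) (fun i ↦ u i), hwindow, hy]
  · simp [hy, blockMatrix]

lemma IsMarkovOfOrder.isMarkovChain_block [DecidableEq A] (hV : IsMarkovOfOrder μ V k Q) :
    IsMarkovChain μ (fun t ω ↦ block k (V · ω) t) (blockMatrix Q) where
  measurable t := measurable_pi_lambda _ fun i ↦ hV.measurable (t + i)
  measureReal_eq n w y := by
    rcases Set.eq_empty_or_nonempty {ω | (fun t : Fin (n + 1) ↦ block k (V · ω) t) = w}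
      with hempty | ⟨ω₀, rfl⟩
    · have hsub : {ω | (fun t : Fin (n + 1) ↦ block k (V · ω) t) = w ∧
          block k (V · ω) (n + 1) = y} ⊆ ∅ := hempty ▸ fun ω hω ↦ hω.1
      simp [hempty, Set.subset_empty_iff.1 hsub]
    · simpa only [funext_iff (β := fun _ ↦ Fin (k + 1) → A), Fin.val_last] using
        hV.measureReal_block_eq n (V · ω₀) y

variable [MeasurableSingletonClass A] [IsProbabilityMeasure μ]

lemma IsMarkovOfOrder.law_block_vecMul [Fintype A] [DecidableEq A]
    (hV : IsMarkovOfOrder μ V k Q)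
    (hstat : ∀ y, μ.real {ω | block k (V · ω) 1 = y} = μ.real {ω | block k (V · ω) 0 = y}) :
    (fun x ↦ μ.real {ω | block k (V · ω) 0 = x}) ᵥ* blockMatrix Q =
      fun x ↦ μ.real {ω | block k (V · ω) 0 = x} :=
  (hV.isMarkovChain_block.law_vecMul 0).trans (funext hstat)

lemma IsMarkovOfOrder.law_block_pos [Finite A] (hV : IsMarkovOfOrder μ V k Q)
    (hQ : ∀ h s, 0 < Q h s)
    (hstat : ∀ y, μ.real {ω | block k (V · ω) 1 = y} = μ.real {ω | block k (V · ω) 0 = y})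
    (x : Fin (k + 1) → A) : 0 < μ.real {ω | block k (V · ω) 0 = x} := by
  cases nonempty_fintype A
  exact pos_of_vecMul_eq_self (blockMatrix_isIrreducible hQ)
    (measureReal_fiber_mem_stdSimplex (hV.isMarkovChain_block.measurable 0))
    (hV.law_block_vecMul hstat) x

theorem IsMarkovOfOrder.exists_tendstoInDistribution_comp_empiricalFreq_block
    [Fintype A] [DecidableEq A] (hV : IsMarkovOfOrder μ V k Q) (hQ : ∀ h s, 0 < Q h s)
    (hQsum : ∀ h, ∑ s, Q h s = 1)
    (hstat : ∀ y, μ.real {ω | block k (V · ω) 1 = y} = μ.real {ω | block k (V · ω) 0 = y})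
    {φ : ((Fin (k + 1) → A) → ℝ) → ℝ}
    (hφ : DifferentiableAt ℝ φ fun x ↦ μ.real {ω | block k (V · ω) 0 = x}) :
    ∃ v : ℝ≥0, TendstoInDistribution
      (fun (m : ℕ) ω ↦ √m * (φ (empiricalFreq (block k (V · ω)) m) -
        φ fun x ↦ μ.real {ω | block k (V · ω) 0 = x})) atTop id (fun _ ↦ μ)
      (ProbabilityTheory.gaussianReal 0 v) :=
  hV.isMarkovChain_block.exists_tendstoInDistribution_comp_empiricalFreq
    (blockMatrix_mem_rowStochastic (fun h s ↦ (hQ h s).le) hQsum) (blockMatrix_isIrreducible hQ)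
    (measureReal_fiber_mem_stdSimplex (hV.isMarkovChain_block.measurable 0))
    (hV.law_block_vecMul hstat) hφ

end Blocks

/-! ### The plug-in estimator of directed information -/

section PlugIn

variable {𝒳 Ω : Type*} {k : ℕ}

lemma differentiableAt_condMI [Fintype 𝒳]
    {p : Blk 𝒳 (k + 1) → Blk 𝒳 (k + 1) → Blk 𝒳 (k + 1) → ℝ} (hp : ∀ a b c, 0 < p a b c) :
    DifferentiableAt ℝ condMI p := by
  refine DifferentiableAt.fun_sum fun a _ ↦ DifferentiableAt.fun_sum fun b _ ↦
    DifferentiableAt.fun_sum fun c _ ↦ ?_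
  have : Nonempty 𝒳 := ⟨a 0⟩
  have hYkZ : 0 < margYkZ p (Fin.init b) c :=
    sum_pos (fun _ _ ↦ sum_pos (fun _ _ ↦ hp _ _ _) univ_nonempty) univ_nonempty
  have hYZ : 0 < margYZ p b c := sum_pos (fun _ _ ↦ hp _ _ _) univ_nonempty
  have hXYkZ : 0 < margXYkZ p a (Fin.init b) c := sum_pos (fun _ _ ↦ hp _ _ _) univ_nonempty
  have hdYkZ : DifferentiableAt ℝ (fun p ↦ margYkZ p (Fin.init b) c) p := by
    unfold margYkZ
    fun_prop
  have hdYZ : DifferentiableAt ℝ (fun p ↦ margYZ p b c) p := by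
    unfold margYZ
    fun_prop
  have hdXYkZ : DifferentiableAt ℝ (fun p ↦ margXYkZ p a (Fin.init b) c) p := by
    unfold margXYkZ
    fun_prop
  have habc := hp a b c
  fun_prop (disch := positivity)

/-- Three parallel blocks viewed as one block of joint symbols, which turns the three processes into
a single process over a larger alphabet. -/
def zipBlocks (L : ℕ) : Hist 𝒳 L ≃ (Fin L → Sym 𝒳) where
  toFun h i := (h.1 i, h.2.1 i, h.2.2 i)
  invFun v := (fun i ↦ (v i).1, fun i ↦ (v i).2.1, fun i ↦ (v i).2.2)

/-- The three processes viewed as one process with values in the joint symbols. -/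
def jointSymbol (X Y Z : ℕ → Ω → 𝒳) : ℕ → Ω → Sym 𝒳 := fun t ω ↦ (X t ω, Y t ω, Z t ω)

variable {X Y Z : ℕ → Ω → 𝒳}

lemma blockEvent_eq_zipBlocks (t L : ℕ) (a b c : Blk 𝒳 L) :
    blockEvent X Y Z t L a b c =
      {ω | (fun i : Fin L ↦ jointSymbol X Y Z (t + i) ω) = zipBlocks L (a, b, c)} := by
  ext ω
  simp [blockEvent, jointSymbol, zipBlocks, funext_iff]

lemma empDist_eq_empiricalFreq [DecidableEq 𝒳] (n : ℕ) (a b c : Blk 𝒳 (k + 1)) (ω : Ω) :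
    empDist X Y Z k n a b c ω =
      empiricalFreq (block k (jointSymbol X Y Z · ω)) (n - k) (zipBlocks _ (a, b, c)) := by
  simp [empDist, empDistSeq, empiricalFreq, block, jointSymbol, zipBlocks, funext_iff]

variable [MeasurableSpace Ω] {μ : Measure Ω}

lemma statDist_eq_measureReal_block (a b c : Blk 𝒳 (k + 1)) :
    statDist μ X Y Z k a b c =
      μ.real {ω | block k (jointSymbol X Y Z · ω) 0 = zipBlocks _ (a, b, c)} := by
  rw [statDist, blockEvent_eq_zipBlocks]
  rfl

lemma measureReal_block_one_eq_of_stationary (hstat : Stationary μ X Y Z)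
    (x : Fin (k + 1) → Sym 𝒳) :
    μ.real {ω | block k (jointSymbol X Y Z · ω) 1 = x} =
      μ.real {ω | block k (jointSymbol X Y Z · ω) 0 = x} := by
  obtain ⟨⟨a, b, c⟩, rfl⟩ := (zipBlocks (k + 1)).surjective x
  have h := hstat 1 (k + 1) a b c
  rw [blockEvent_eq_zipBlocks, blockEvent_eq_zipBlocks] at h
  exact congrArg ENNReal.toReal h

lemma isMarkovOfOrder_jointSymbol [MeasurableSpace 𝒳] [Countable 𝒳] {Q : Hist 𝒳 k → Sym 𝒳 → ℝ}
    (hmeas : MeasProc X Y Z) (hMarkov : MarkovOfOrder μ X Y Z k Q) :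
    IsMarkovOfOrder μ (jointSymbol X Y Z) k fun h ↦ Q ((zipBlocks k).symm h) where
  measurable t := (measurable_to_countable' fun x ↦ (hmeas t x).1).prodMk
    ((measurable_to_countable' fun x ↦ (hmeas t x).2.1).prodMk
      (measurable_to_countable' fun x ↦ (hmeas t x).2.2))
  measureReal_eq j v s := by
    obtain ⟨⟨pa, pb, pc⟩, hp⟩ := (zipBlocks j).surjective fun i ↦ v (Fin.castAdd k i)
    obtain ⟨⟨a, b, c⟩, ha⟩ := (zipBlocks k).surjective fun i ↦ v (Fin.natAdd j i)
    have hpast : {ω | (fun i : Fin (j + k) ↦ jointSymbol X Y Z i ω) = v} =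
        blockEvent X Y Z 0 j pa pb pc ∩ blockEvent X Y Z j k a b c := by
      ext ω
      simp [blockEvent_eq_zipBlocks, hp, ha, funext_iff, Fin.forall_fin_add]
    have hnext : {ω | jointSymbol X Y Z (j + k) ω = s} =
        {ω | X (j + k) ω = s.1 ∧ Y (j + k) ω = s.2.1 ∧ Z (j + k) ω = s.2.2} := by
      ext ω
      simp [jointSymbol, Prod.ext_iff]
    rw [Set.ofPred_and, hpast, hnext, ← ha, Equiv.symm_apply_apply, mul_comm]
    exact hMarkov j pa pb pc a b c s

lemma tendstoInDist_of_tendstoInDistribution [IsProbabilityMeasure μ] {W : ℕ → Ω → ℝ}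
    {ν : Measure ℝ} [IsProbabilityMeasure ν]
    (hW : TendstoInDistribution W atTop id (fun _ ↦ μ) ν) : TendstoInDist μ W ν := by
  intro f
  have hf := ProbabilityMeasure.tendsto_iff_forall_integral_tendsto.1 hW.tendsto f
  simpa only [ProbabilityMeasure.coe_mk, Measure.map_id, integral_map (hW.forall_aemeasurable _)
    f.continuous.aestronglyMeasurable] using hf

end PlugIn

theorem plugin_DI_clt_edge_present_general {𝒳 : Type*} [Fintype 𝒳] [DecidableEq 𝒳] {Ω : Type*}
    [MeasurableSpace Ω] (μ : Measure Ω) [IsProbabilityMeasure μ] (X Y Z : ℕ → Ω → 𝒳) (k : ℕ)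
    (Q : Hist 𝒳 k → Sym 𝒳 → ℝ) (hmeas : MeasProc X Y Z) (hQ : IsTransMat Q)
    (hQpos : ∀ h s, 0 < Q h s) (hMarkov : MarkovOfOrder μ X Y Z k Q)
    (hstat : Stationary μ X Y Z) :
    ∃ σ2 : ℝ≥0,
      TendstoInDist μ
        (fun n ω ↦ √((n - k : ℕ) : ℝ) * (empMI X Y Z k n ω - condMI (statDist μ X Y Z k)))
        (ProbabilityTheory.gaussianReal 0 σ2) := by
  let : MeasurableSpace 𝒳 := ⊤
  have : DiscreteMeasurableSpace 𝒳 := ⟨fun _ ↦ trivial⟩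
  let φ (p : (Fin (k + 1) → Sym 𝒳) → ℝ) : ℝ := condMI fun a b c ↦ p (zipBlocks _ (a, b, c))
  have hV := isMarkovOfOrder_jointSymbol hmeas hMarkov
  have hblock := measureReal_block_one_eq_of_stationary (k := k) hstat
  have hφ : DifferentiableAt ℝ φ
      fun x ↦ μ.real {ω | block k (jointSymbol X Y Z · ω) 0 = x} :=
    (differentiableAt_condMI fun a b c ↦ hV.law_block_pos (fun h ↦ hQpos _) hblock _).fun_comp' _
      (by fun_prop)
  obtain ⟨σ2, hσ2⟩ := hV.exists_tendstoInDistribution_comp_empiricalFreq_block (fun h ↦ hQpos _)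
    (fun h ↦ hQ.2 _) hblock hφ
  refine ⟨σ2, fun f ↦ ?_⟩
  simpa only [Function.comp_def, φ, empMI, empDist_eq_empiricalFreq,
    funext₃ statDist_eq_measureReal_block] using
    (tendstoInDist_of_tendstoInDistribution hσ2 f).comp (tendsto_sub_atTop_nat k)

/-- Under Assumptions 1–3, if the edge `X → Y` is present (no factorization
of `Q`), so that `Ī_xy := I(Ȳ_{k+1}; X̄₁ᵏ⁺¹ | Ȳ₁ᵏ, Z̄₁ᵏ⁺¹) > 0`, then there is a finite
`σ² ≥ 0` with `√(n−k)·(Î_n^{(k)}(X→Y‖Z) − Ī_xy) → N(0, σ²)` in distribution. -/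
theorem plugin_DI_clt_edge_present
    {𝒳 : Type*} [Fintype 𝒳] [DecidableEq 𝒳] [Nonempty 𝒳]
    {Ω : Type*} [MeasurableSpace Ω]
    (μ : MeasureTheory.Measure Ω) [MeasureTheory.IsProbabilityMeasure μ]
    (X Y Z : ℕ → Ω → 𝒳) (k : ℕ) (Q : Hist 𝒳 k → Sym 𝒳 → ℝ)
    (hmeas : MeasProc X Y Z)
    (hQ : IsTransMat Q) (hQpos : ∀ h s, 0 < Q h s)
    (hMarkov : MarkovOfOrder μ X Y Z k Q)
    (hstat : Stationary μ X Y Z)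
    (hA3 : CondIndepPast μ X Y Z k)
    (hedge : ¬ IsFactorized Q)
    (hIpos : 0 < condMI (statDist μ X Y Z k)) :
    ∃ σ2 : ℝ≥0,
      TendstoInDist μ
        (fun n ω => Real.sqrt ((n - k : ℕ) : ℝ) *
          (empMI X Y Z k n ω - condMI (statDist μ X Y Z k)))
        (ProbabilityTheory.gaussianReal 0 σ2) :=
  plugin_DI_clt_edge_present_general μ X Y Z k Q hmeas hQ hQpos hMarkov hstat

end DIG
end
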